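/- For every integer n ≥ 13 there exists a constant qₙ (depending only on n) such that: if q, a₁ are integers with q ≥ 2 and a₁² ≤ 4q satisfying −aₙ = ⌊2·q^{n/2}⌋, then either q ≤ qₙ or the pair (q, a₁) is supersingular. -/

import Mathlib

namespace RothAux
open MvPolynomial

/-- exponents -/
abbrev Ex := Fin 3 →₀ ℕ

/-- multiply the coefficients by a weight function -/
noncomputable def op {R : Type*} [CommRing R] (g : Ex → ℕ) :
    MvPolynomial (Fin 3) R →ₗ[R] MvPolynomial (Fin 3) R :=
  (MvPolynomial.basisMonomials (Fin 3) R).constr R (fun e => monomial e (g e : R))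

lemma op_monomial {R : Type*} [CommRing R] (g : Ex → ℕ) (e : Ex) (a : R) :
    op g (monomial e a) = monomial e ((g e : R) * a) := by
  have h : (monomial e a : MvPolynomial (Fin 3) R) = a • (basisMonomials (Fin 3) R e) := by
    simp [smul_monomial]
  rw [h, map_smul, op, Module.Basis.constr_basis, smul_monomial, smul_eq_mul, mul_comm]

lemma coeff_op {R : Type*} [CommRing R] (g : Ex → ℕ) (e : Ex) (P : MvPolynomial (Fin 3) R) :
    coeff e (op g P) = (g e : R) * coeff e P := by
  induction P using MvPolynomial.monomial_add_induction_on with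
  | C a => 
    rw [← monomial_zero', op_monomial, coeff_monomial, coeff_monomial]
    split_ifs with h
    · rw [h]
    · simp
  | monomial_add d a p _ _ ih =>
    rw [map_add, op_monomial, coeff_add, coeff_add, ih, coeff_monomial, coeff_monomial]
    split_ifs with h
    · rw [h]; ring
    · simp

lemma op_op {R : Type*} [CommRing R] (g h : Ex → ℕ) (P : MvPolynomial (Fin 3) R) :
    op g (op h P) = op (fun e => g e * h e) P := by
  ext e; simp only [coeff_op]; push_cast; ring

lemma map_op (g : Ex → ℕ) (P : MvPolynomial (Fin 3) ℤ) :
    map (Int.castRingHom ℝ) (op g P) = op g (map (Int.castRingHom ℝ) P) := by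
  ext e; simp [coeff_op, coeff_map]

/-- translation -/
noncomputable def shift (ξ : Fin 3 → ℝ) :
    MvPolynomial (Fin 3) ℝ →ₐ[ℝ] MvPolynomial (Fin 3) ℝ :=
  aeval (fun i => X i + C (ξ i))

/-- weighted order of vanishing at least `e` -/
def Idx (ξ w : Fin 3 → ℝ) (e : ℝ) (P : MvPolynomial (Fin 3) ℝ) : Prop :=
  ∀ i : Ex, (∑ s, (i s : ℝ) * w s) < e → coeff i (shift ξ P) = 0

variable {ξ w : Fin 3 → ℝ}

lemma Idx.mono {e e' : ℝ} {P : MvPolynomial (Fin 3) ℝ} (h : Idx ξ w e P) (h' : e' ≤ e) :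
    Idx ξ w e' P := fun i hi => h i (hi.trans_le h')

lemma Idx.add {e : ℝ} {P Q : MvPolynomial (Fin 3) ℝ} (h : Idx ξ w e P) (h' : Idx ξ w e Q) :
    Idx ξ w e (P + Q) := fun i hi => by rw [map_add, coeff_add, h i hi, h' i hi, add_zero]

lemma Idx.smul {e : ℝ} {P : MvPolynomial (Fin 3) ℝ} (h : Idx ξ w e P) (c : ℝ) :
    Idx ξ w e (c • P) := fun i hi => by
      rw [map_smul, coeff_smul, h i hi, smul_zero]

lemma Idx.zero {e : ℝ} : Idx ξ w e 0 := fun i _ => by simp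

lemma Idx.sum {ι : Type*} {e : ℝ} (S : Finset ι) (f : ι → MvPolynomial (Fin 3) ℝ)
    (h : ∀ i ∈ S, Idx ξ w e (f i)) : Idx ξ w e (∑ i ∈ S, f i) := by
  intro i hi
  rw [map_sum, coeff_sum]
  exact Finset.sum_eq_zero fun j hj => h j hj i hi

lemma Idx.of_nonpos (hw : ∀ s, 0 ≤ w s) {e : ℝ} (he : e ≤ 0) (P : MvPolynomial (Fin 3) ℝ) :
    Idx ξ w e P := fun i hi => by
  have : (0:ℝ) ≤ ∑ s, (i s : ℝ) * w s := Finset.sum_nonneg fun s _ => by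
    have := hw s; positivity
  linarith

lemma Idx.mul {e e' : ℝ} {P Q : MvPolynomial (Fin 3) ℝ} (h : Idx ξ w e P) (h' : Idx ξ w e' Q) :
    Idx ξ w (e + e') (P * Q) := fun i hi => by
  rw [map_mul, coeff_mul]
  refine Finset.sum_eq_zero fun x hx => ?_
  rw [Finset.HasAntidiagonal.mem_antidiagonal] at hx
  by_cases h1 : (∑ s, (x.1 s : ℝ) * w s) < e
  · rw [h _ h1, zero_mul]
  · rw [h' x.2, mul_zero]
    have : (∑ s, (i s : ℝ) * w s) = (∑ s, (x.1 s : ℝ) * w s) + ∑ s, (x.2 s : ℝ) * w s := by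
      rw [← Finset.sum_add_distrib, ← hx]
      refine Finset.sum_congr rfl fun s _ => ?_
      simp; ring
    linarith

lemma Idx.prod (hw : ∀ s, 0 ≤ w s) {ι : Type*} (S : Finset ι) (f : ι → MvPolynomial (Fin 3) ℝ) (e : ι → ℝ)
    (h : ∀ i ∈ S, Idx ξ w (e i) (f i)) : Idx ξ w (∑ i ∈ S, e i) (∏ i ∈ S, f i) := by
  classical
  induction S using Finset.induction_on with
  | empty => exact Idx.of_nonpos hw (by simp) _
  | insert a S ha ih =>
    rw [Finset.sum_insert ha, Finset.prod_insert ha]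
    exact (h a (by simp)).mul (ih fun i hi => h i (by simp [hi]))

lemma Idx.det (hw : ∀ s, 0 ≤ w s) {k : ℕ} (M : Matrix (Fin k) (Fin k) (MvPolynomial (Fin 3) ℝ))
    (e : Fin k → ℝ) (h : ∀ a b, Idx ξ w (e b) (M a b)) : Idx ξ w (∑ b, e b) M.det := by
  rw [Matrix.det_apply']
  refine Idx.sum _ _ fun σ _ => ?_
  have h1 : Idx ξ w (∑ b, e b) (∏ i, M (σ i) i) := Idx.prod hw _ _ _ fun i _ => h _ _
  have h2 := h1.smul ((((Equiv.Perm.sign σ : ℤˣ) : ℤ)) : ℝ)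
  convert h2 using 1
  rw [smul_eq_C_mul]
  simp

lemma shift_pderiv (i : Fin 3) (P : MvPolynomial (Fin 3) ℝ) :
    shift ξ (pderiv i P) = pderiv i (shift ξ P) := by
  induction P using MvPolynomial.induction_on with
  | C a => simp [shift]
  | add p q hp hq => simp [hp, hq]
  | mul_X p j hp =>
    simp only [Derivation.leibniz, map_add, smul_eq_mul, map_mul, hp]
    congr 1
    congr 1
    by_cases hij : j = i
    · subst hij; simp [shift]
    · rw [pderiv_X_of_ne hij]; simp [shift, pderiv_X_of_ne hij]

lemma Idx.pderiv {e : ℝ} {P : MvPolynomial (Fin 3) ℝ} (h : Idx ξ w e P) (i : Fin 3) :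
    Idx ξ w (e - w i) (pderiv i P) := fun j hj => by
  rw [shift_pderiv, coeff_pderiv, h, zero_mul]
  have : ∑ s, (((j + Finsupp.single i 1 : Ex) s : ℕ) : ℝ) * w s = (∑ s, (j s : ℝ) * w s) + w i := by
    simp only [Finsupp.add_apply, Nat.cast_add, add_mul, Finset.sum_add_distrib]
    congr 1
    rw [Finset.sum_eq_single i]
    · simp
    · intro b _ hb; simp [Finsupp.single_apply, hb.symm]
    · simp

  linarith

/-- linear functional on exponents -/
def lam (l : Fin 3 → ℕ) (e : Ex) : ℕ := ∑ s, l s * e s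

lemma op_lam (l : Fin 3 → ℕ) (P : MvPolynomial (Fin 3) ℝ) :
    op (lam l) P = ∑ i, (l i : ℝ) • (X i * pderiv i P) := by
  induction P using MvPolynomial.monomial_add_induction_on with
  | C a => rw [← monomial_zero', op_monomial]; simp [lam]
  | monomial_add d a p _ _ ih =>
    rw [map_add, ih, op_monomial]
    simp only [map_add, mul_add, smul_add, Finset.sum_add_distrib]
    congr 1
    simp only [pderiv_monomial]
    have : ∀ i : Fin 3, (X i : MvPolynomial (Fin 3) ℝ) * monomial (d - Finsupp.single i 1) (a * (d i : ℝ)) =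
        monomial d (a * d i) := by
      intro i
      by_cases h : d i = 0
      · simp [h]
      · rw [X, monomial_mul, one_mul]
        have hd : (Finsupp.single i 1 + (d - Finsupp.single i 1) : Ex) = d := by
          ext j
          simp only [Finsupp.add_apply, Finsupp.tsub_apply, Finsupp.single_apply]
          split_ifs with hh
          · subst hh; omega
          · omega
        rw [hd]
    simp only [this, smul_monomial, lam]
    rw [← map_sum]
    congr 1
    push_cast
    rw [Finset.sum_mul]
    refine Finset.sum_congr rfl fun s _ => ?_
    simp; ring

lemma Idx.op_lam (hw : ∀ s, 0 ≤ w s) {e ω : ℝ} {P : MvPolynomial (Fin 3) ℝ} (h : Idx ξ w e P) (l : Fin 3 → ℕ)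
    (hl : ∀ i, l i ≠ 0 → w i ≤ ω) : Idx ξ w (e - ω) (op (lam l) P) := by
  rw [RothAux.op_lam]
  refine Idx.sum _ _ fun i _ => ?_
  by_cases hi : l i = 0
  · simp only [hi, Nat.cast_zero, zero_smul]; exact Idx.zero
  · refine Idx.smul ?_ _
    have h1 := (Idx.of_nonpos (ξ := ξ) hw le_rfl (X i)).mul (h.pderiv i)
    exact h1.mono (by have := hl i hi; linarith)

lemma Idx.op_desc (hw : ∀ s, 0 ≤ w s) {e ω : ℝ} (hω : 0 ≤ ω) {P : MvPolynomial (Fin 3) ℝ} (h : Idx ξ w e P) (l : Fin 3 → ℕ)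
    (hl : ∀ i, l i ≠ 0 → w i ≤ ω) (a : ℕ) :
    Idx ξ w (e - a * ω) (op (fun x => (lam l x).descFactorial a) P) := by
  induction a with
  | zero => 
    convert h using 1
    · simp
    · ext x; simp [coeff_op]
  | succ a ih =>
    have h1 := (ih.op_lam hw l hl)
    have h2 := (ih.smul (-(a:ℝ))).mono (e' := e - a * ω - ω) (by linarith)
    convert h1.add h2 using 1
    · push_cast; ring
    · ext x
      rw [op_op]
      simp only [coeff_op, coeff_add, coeff_smul, Nat.descFactorial_succ, smul_eq_mul]
      rcases le_or_gt a (lam l x) with hx | hx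
      · push_cast [Nat.cast_sub hx]; ring
      · rw [Nat.descFactorial_of_lt hx]; simp

lemma Idx.op_choose (hw : ∀ s, 0 ≤ w s) {e ω : ℝ} (hω : 0 ≤ ω) {P : MvPolynomial (Fin 3) ℝ} (h : Idx ξ w e P) (l : Fin 3 → ℕ)
    (hl : ∀ i, l i ≠ 0 → w i ≤ ω) (a : ℕ) :
    Idx ξ w (e - a * ω) (op (fun x => (lam l x).choose a) P) := by
  have := (h.op_desc hw hω l hl a).smul ((a.factorial : ℝ)⁻¹)
  convert this using 1
  ext x
  simp only [coeff_op, coeff_smul, smul_eq_mul, Nat.descFactorial_eq_factorial_mul_choose]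
  push_cast
  have : (a.factorial : ℝ) ≠ 0 := by positivity
  field_simp

end RothAux

namespace RothAux
open Polynomial in
lemma uni_wronskian {k : ℕ} (φ : Fin k → ℝ[X]) (hφ : LinearIndependent ℝ φ)
    (M : Matrix (Fin k) (Fin k) ℝ[X])
    (hM : ∀ a j N, (M a j).coeff N = (N.choose (a : ℕ) : ℝ) * (φ j).coeff N) : M.det ≠ 0 := by
  intro hdet
  obtain ⟨v, hv0, hv⟩ := Matrix.exists_vecMul_eq_zero_iff.mpr hdet
  have hv' : ∀ j, ∑ a, v a * M a j = 0 := fun j => congrFun hv j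
  obtain ⟨a1, ha1⟩ : ∃ a, v a ≠ 0 := by
    by_contra h; push Not at h; exact hv0 (funext h)
  set m := Finset.univ.sup (fun a => (v a).natDegree) with hm
  have hmle : ∀ a, (v a).natDegree ≤ m := fun a => Finset.le_sup (f := fun a => (v a).natDegree) (Finset.mem_univ a)
  have hkne : (Finset.univ : Finset (Fin k)).Nonempty := ⟨a1, Finset.mem_univ _⟩
  have hγ : ∃ a, (v a).coeff m ≠ 0 := by
    by_cases hm0 : m = 0
    · refine ⟨a1, ?_⟩
      have h0 := hmle a1
      rw [hm0] at h0 ⊢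
      intro h
      apply ha1
      rw [Polynomial.eq_C_of_natDegree_le_zero h0, h, map_zero]
    · obtain ⟨a, -, ha⟩ := Finset.exists_mem_eq_sup _ hkne (fun a => (v a).natDegree)
      refine ⟨a, ?_⟩
      have h1 : m = (v a).natDegree := ha
      rw [h1]
      intro h
      have : v a = 0 := leadingCoeff_eq_zero.mp h
      rw [this] at h1
      simp at h1
      exact hm0 h1
  set γ : Fin k → ℝ := fun a => (v a).coeff m with hγdef
  let p : ℝ[X] := ∑ a : Fin k, C (γ a / ((a : ℕ).factorial : ℝ)) * descPochhammer ℝ (a : ℕ)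
  have hpe : ∀ N : ℕ, p.eval (N : ℝ) = ∑ a : Fin k, γ a * (N.choose (a : ℕ) : ℝ) := by
    intro N
    simp only [p, eval_finsetSum, eval_mul, eval_C]
    refine Finset.sum_congr rfl fun a _ => ?_
    rw [descPochhammer_eval_eq_descFactorial, Nat.descFactorial_eq_factorial_mul_choose]
    have : (((a:ℕ).factorial : ℕ) : ℝ) ≠ 0 := by positivity
    push_cast
    field_simp
  have hp0 : p ≠ 0 := by
    intro hp
    have hall : ∀ N : ℕ, ∀ a : Fin k, (a : ℕ) = N → γ a = 0 := by
      intro N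
      induction N using Nat.strong_induction_on with
      | _ N ih =>
        intro a ha
        have h1 := hpe N
        rw [hp, eval_zero, Finset.sum_eq_single a] at h1
        · rw [ha] at h1; simpa using h1.symm
        · intro b _ hb
          rcases lt_trichotomy (b : ℕ) N with h | h | h
          · rw [ih b h b rfl, zero_mul]
          · exact absurd (Fin.ext (h.trans ha.symm)) hb
          · rw [Nat.choose_eq_zero_of_lt h]; simp
        · simp
    obtain ⟨a, ha⟩ := hγ
    exact ha (hall a a rfl)
  have hpdeg : p.natDegree < k := by
    have hk : 0 < k := a1.pos
    have : p.natDegree ≤ k - 1 := by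
      refine natDegree_sum_le_of_forall_le _ _ fun a _ => ?_
      refine (natDegree_C_mul_le _ _).trans ?_
      rw [descPochhammer_natDegree]; have := a.2; omega
    omega
  have key : ∀ x : Fin k → ℝ, (∑ j, x j • φ j) ≠ 0 →
      p.eval (((∑ j, x j • φ j).natDegree : ℕ) : ℝ) = 0 := by
    intro x hx
    set f := ∑ j, x j • φ j with hf
    set N := f.natDegree with hN
    have hF : ∀ a n, (∑ j, x j • M a j).coeff n = (n.choose (a:ℕ) : ℝ) * f.coeff n := by
      intro a n
      simp only [hf, finsetSum_coeff, coeff_smul, hM, smul_eq_mul, Finset.mul_sum]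
      exact Finset.sum_congr rfl fun j _ => by ring
    have hFd : ∀ a, (∑ j, x j • M a j).natDegree ≤ N := by
      intro a
      rw [natDegree_le_iff_coeff_eq_zero]
      intro n hn
      rw [hF, coeff_eq_zero_of_natDegree_lt hn, mul_zero]
    have hsum : ∑ a, v a * (∑ j, x j • M a j) = 0 := by
      simp only [Finset.mul_sum]
      rw [Finset.sum_comm]
      refine Finset.sum_eq_zero fun j _ => ?_
      simp only [mul_smul_comm]
      rw [← Finset.smul_sum, hv', smul_zero]
    have h1 := congrArg (fun g => g.coeff (m + N)) hsum
    simp only [finsetSum_coeff, coeff_zero] at h1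
    have h2 : ∀ a, (v a * ∑ j, x j • M a j).coeff (m + N) = γ a * (N.choose (a:ℕ)) * f.leadingCoeff := by
      intro a
      rw [coeff_mul_add_eq_of_natDegree_le (hmle a) (hFd a), hF, leadingCoeff, mul_assoc]
    simp only [h2, ← Finset.sum_mul] at h1
    rw [hpe]
    exact (mul_eq_zero.mp h1).resolve_right (leadingCoeff_ne_zero.mpr hx)
  let Z := p.roots.toFinset
  have hZ : Z.card < k := (Multiset.toFinset_card_le _).trans_lt ((card_roots' p).trans_lt hpdeg)
  let T : (Fin k → ℝ) →ₗ[ℝ] (Z → ℝ) := LinearMap.pi fun z =>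
    (lcoeff ℝ ⌊(z : ℝ)⌋₊).comp (Fintype.linearCombination ℝ φ)
  have hT : Function.Injective T := by
    rw [injective_iff_map_eq_zero]
    intro x hx
    have hfx : Fintype.linearCombination ℝ φ x = ∑ j, x j • φ j := by
      simp [Fintype.linearCombination_apply]
    by_cases h0 : (∑ j, x j • φ j) = 0
    · exact funext (Fintype.linearIndependent_iff.mp hφ x h0)
    · exfalso
      have hz : (((∑ j, x j • φ j).natDegree : ℕ) : ℝ) ∈ Z := by
        simp only [Z, Multiset.mem_toFinset, mem_roots hp0]
        exact key x h0
      have := congrFun hx ⟨_, hz⟩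
      simp only [T, LinearMap.pi_apply, LinearMap.comp_apply, lcoeff_apply, hfx, Nat.floor_natCast, Pi.zero_apply] at this
      exact h0 (leadingCoeff_eq_zero.mp this)
  have := LinearMap.finrank_le_finrank_of_injective hT
  simp at this
  omega

open MvPolynomial

/-- specialisation `X^e ↦ T^(lam e)` -/
noncomputable def spec (l : Fin 3 → ℕ) : MvPolynomial (Fin 3) ℝ →ₐ[ℝ] Polynomial ℝ :=
  aeval (fun i => Polynomial.X ^ l i)

lemma spec_monomial (l : Fin 3 → ℕ) (e : Ex) (a : ℝ) :
    spec l (monomial e a) = Polynomial.monomial (lam l e) a := by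
  rw [spec, aeval_monomial, ← Polynomial.C_mul_X_pow_eq_monomial]
  congr 1
  rw [Finsupp.prod_fintype _ _ (by simp), lam, ← Finset.prod_pow_eq_pow_sum]
  exact Finset.prod_congr rfl fun i _ => by rw [← pow_mul]

lemma spec_op (l : Fin 3 → ℕ) (a : ℕ) (P : MvPolynomial (Fin 3) ℝ) (N : ℕ) :
    (spec l (op (fun x => (lam l x).choose a) P)).coeff N = (N.choose a : ℝ) * (spec l P).coeff N := by
  induction P using MvPolynomial.monomial_add_induction_on with
  | C c =>
    rw [← monomial_zero', op_monomial, spec_monomial, spec_monomial, Polynomial.coeff_monomial,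
      Polynomial.coeff_monomial]
    split_ifs with h
    · rw [h]
    · simp
  | monomial_add d c p _ _ ih =>
    rw [map_add, map_add, map_add, op_monomial, spec_monomial, spec_monomial, Polynomial.coeff_add,
      Polynomial.coeff_add, Polynomial.coeff_monomial, Polynomial.coeff_monomial, ih]
    split_ifs with h
    · rw [h]; ring
    · simp

lemma spec_coeff (l : Fin 3 → ℕ) (A : Set Ex) (hA : Set.InjOn (lam l) A) (P : MvPolynomial (Fin 3) ℝ)
    (hP : ∀ e, coeff e P ≠ 0 → e ∈ A) (e : Ex) (he : e ∈ A) : (spec l P).coeff (lam l e) = coeff e P := by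
  conv_lhs => rw [P.as_sum]
  rw [map_sum, Polynomial.finsetSum_coeff]
  simp only [spec_monomial, Polynomial.coeff_monomial]
  rw [Finset.sum_eq_single e]
  · simp
  · intro b hb hbe
    rw [if_neg]
    intro h
    exact hbe (hA (hP b (mem_support_iff.mp hb)) he h)
  · intro h
    simpa using h

lemma mv_wronskian {k : ℕ} (φ : Fin k → MvPolynomial (Fin 3) ℝ) (hφ : LinearIndependent ℝ φ)
    (l : Fin 3 → ℕ) (A : Set Ex) (hA : Set.InjOn (lam l) A) (hP : ∀ j e, coeff e (φ j) ≠ 0 → e ∈ A) :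
    (Matrix.of fun a j : Fin k => op (fun x => (lam l x).choose (a : ℕ)) (φ j)).det ≠ 0 := by
  intro h
  have h1 := congrArg (spec l) h
  rw [map_zero, AlgHom.map_det] at h1
  refine uni_wronskian (fun j => spec l (φ j)) ?_ _ ?_ h1
  · rw [Fintype.linearIndependent_iff] at hφ ⊢
    intro g hg
    apply hφ
    ext e
    rw [coeff_zero]
    by_cases he : e ∈ A
    · rw [← spec_coeff l A hA _ _ e he, map_sum]
      · simp only [map_smul, hg, Polynomial.coeff_zero]
      · intro e' he'
        by_contra hne
        apply he'
        rw [coeff_sum]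
        refine Finset.sum_eq_zero fun j _ => ?_
        rw [coeff_smul]
        by_contra h3
        exact hne (hP j e' fun h4 => h3 (by rw [h4, smul_zero]))
    · rw [coeff_sum]
      refine Finset.sum_eq_zero fun j _ => ?_
      rw [coeff_smul]
      by_contra h3
      exact he (hP j e fun h4 => h3 (by rw [h4, smul_zero]))
  · intro a j N
    simp [spec_op]

end RothAux

namespace RothAux
open MvPolynomial

noncomputable def len (P : MvPolynomial (Fin 3) ℤ) : ℕ := ∑ e ∈ P.support, (coeff e P).natAbs

lemma len_eq_sum (P : MvPolynomial (Fin 3) ℤ) (S : Finset Ex) (h : P.support ⊆ S) :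
    len P = ∑ e ∈ S, (coeff e P).natAbs := by
  refine Finset.sum_subset h fun e _ he => ?_
  rw [notMem_support_iff.mp he]; rfl

lemma sum_le_len (P : MvPolynomial (Fin 3) ℤ) (S : Finset Ex) :
    ∑ e ∈ S, (coeff e P).natAbs ≤ len P := by
  classical
  rw [len_eq_sum P (P.support ∪ S) Finset.subset_union_left]
  exact Finset.sum_le_sum_of_subset Finset.subset_union_right

lemma len_add_le (P Q : MvPolynomial (Fin 3) ℤ) : len (P + Q) ≤ len P + len Q := by
  classical
  rw [len_eq_sum (P + Q) (P.support ∪ Q.support) support_add,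
    len_eq_sum P (P.support ∪ Q.support) Finset.subset_union_left,
    len_eq_sum Q (P.support ∪ Q.support) Finset.subset_union_right, ← Finset.sum_add_distrib]
  refine Finset.sum_le_sum fun e _ => ?_
  rw [coeff_add]; exact Int.natAbs_add_le _ _

lemma len_zero : len 0 = 0 := by simp [len]

lemma len_sum_le {ι : Type*} (S : Finset ι) (f : ι → MvPolynomial (Fin 3) ℤ) :
    len (∑ i ∈ S, f i) ≤ ∑ i ∈ S, len (f i) := by
  classical
  induction S using Finset.induction_on with
  | empty => simp [len_zero]
  | insert a S ha ih =>
    rw [Finset.sum_insert ha, Finset.sum_insert ha]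
    exact (len_add_le _ _).trans (by omega)

lemma len_monomial_mul (d : Ex) (a : ℤ) (Q : MvPolynomial (Fin 3) ℤ) :
    len (monomial d a * Q) ≤ a.natAbs * len Q := by
  classical
  conv_lhs => rw [Q.as_sum, Finset.mul_sum]
  refine (len_sum_le _ _).trans ?_
  rw [len, Finset.mul_sum]
  refine Finset.sum_le_sum fun e _ => ?_
  rw [monomial_mul, ← Int.natAbs_mul]
  rw [len_eq_sum _ {d + e} (support_monomial_subset)]
  simp

lemma len_mul_le (P Q : MvPolynomial (Fin 3) ℤ) : len (P * Q) ≤ len P * len Q := by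
  conv_lhs => rw [P.as_sum, Finset.sum_mul]
  refine (len_sum_le _ _).trans ?_
  conv_rhs => rw [len, Finset.sum_mul]
  exact Finset.sum_le_sum fun e _ => len_monomial_mul _ _ _

lemma len_one : len 1 ≤ 1 := by
  have := len_eq_sum (1 : MvPolynomial (Fin 3) ℤ) {0} (by
    rw [← C_1, ← monomial_zero']; exact support_monomial_subset)
  rw [this]; simp

lemma len_prod_le {k : ℕ} (f : Fin k → MvPolynomial (Fin 3) ℤ) (H : ℕ) (h : ∀ i, len (f i) ≤ H) :
    len (∏ i, f i) ≤ H ^ k := by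
  induction k with
  | zero => simpa using len_one
  | succ k ih =>
    rw [Fin.prod_univ_succ, pow_succ']
    exact (len_mul_le _ _).trans (Nat.mul_le_mul (h 0) (ih _ fun i => h _))

lemma len_det_le {k : ℕ} (M : Matrix (Fin k) (Fin k) (MvPolynomial (Fin 3) ℤ)) (H : ℕ)
    (h : ∀ a b, len (M a b) ≤ H) : len M.det ≤ (k * H) ^ k := by
  rw [Matrix.det_apply']
  refine (len_sum_le _ _).trans ?_
  have : ∀ σ ∈ (Finset.univ : Finset (Equiv.Perm (Fin k))),
      len (((Equiv.Perm.sign σ : ℤˣ) : ℤ) * ∏ i, M (σ i) i) ≤ H ^ k := by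
    intro σ _
    have h1 : ((((Equiv.Perm.sign σ : ℤˣ) : ℤ)) : MvPolynomial (Fin 3) ℤ) =
        monomial 0 ((Equiv.Perm.sign σ : ℤˣ) : ℤ) := by
      rw [monomial_zero']; simp
    rw [h1]
    refine (len_monomial_mul _ _ _).trans ?_
    rw [Int.units_natAbs, one_mul]
    exact len_prod_le _ _ fun i => h _ _
  refine (Finset.sum_le_sum this).trans ?_
  rw [Finset.sum_const, Finset.card_univ, Fintype.card_perm, Fintype.card_fin, smul_eq_mul, mul_pow]
  exact Nat.mul_le_mul_right _ (Nat.factorial_le_pow k)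

lemma len_op_le (g : Ex → ℕ) (M : ℕ) (P : MvPolynomial (Fin 3) ℤ)
    (h : ∀ e, coeff e P ≠ 0 → g e ≤ M) : len (op g P) ≤ M * len P := by
  have hs : (op g P).support ⊆ P.support := by
    intro e he
    rw [mem_support_iff, coeff_op] at he
    exact mem_support_iff.mpr (right_ne_zero_of_mul he)
  rw [len_eq_sum _ _ hs, len, Finset.mul_sum]
  refine Finset.sum_le_sum fun e he => ?_
  rw [coeff_op, Int.natAbs_mul]
  exact Nat.mul_le_mul_right _ (by simpa using h e (mem_support_iff.mp he))

/-- degree bound -/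
def Deg {R : Type*} [CommRing R] (D : Fin 3 → ℕ) (P : MvPolynomial (Fin 3) R) : Prop :=
  ∀ e, coeff e P ≠ 0 → ∀ i, e i ≤ D i

lemma Deg.mul {R : Type*} [CommRing R] {D D' : Fin 3 → ℕ} {P Q : MvPolynomial (Fin 3) R}
    (h : Deg D P) (h' : Deg D' Q) : Deg (D + D') (P * Q) := by
  intro e he i
  rw [coeff_mul] at he
  obtain ⟨x, hx, hne⟩ := Finset.exists_ne_zero_of_sum_ne_zero he
  rw [Finset.HasAntidiagonal.mem_antidiagonal] at hx
  have h1 := h _ (left_ne_zero_of_mul hne) i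
  have h2 := h' _ (right_ne_zero_of_mul hne) i
  rw [← hx, Finsupp.add_apply, Pi.add_apply]; omega

lemma Deg.prod {k : ℕ} {R : Type*} [CommRing R] {D : Fin 3 → ℕ} (f : Fin k → MvPolynomial (Fin 3) R)
    (h : ∀ i, Deg D (f i)) : Deg (fun i => k * D i) (∏ i, f i) := by
  induction k with
  | zero =>
    intro e he i
    simp only [Finset.univ_eq_empty, Finset.prod_empty, coeff_one] at he
    split_ifs at he with h0
    · rw [← h0]; simp
    · exact absurd rfl he
  | succ k ih =>
    rw [Fin.prod_univ_succ]
    convert (h 0).mul (ih (fun i => f i.succ) fun i => h _) using 1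
    ext i; simp only [Pi.add_apply]; ring

lemma Deg.sum {ι : Type*} {R : Type*} [CommRing R] {D : Fin 3 → ℕ} (S : Finset ι)
    (f : ι → MvPolynomial (Fin 3) R)
    (h : ∀ i ∈ S, Deg D (f i)) : Deg D (∑ i ∈ S, f i) := by
  intro e he
  rw [coeff_sum] at he
  obtain ⟨x, hx, hne⟩ := Finset.exists_ne_zero_of_sum_ne_zero he
  exact h x hx e hne

lemma Deg.det {k : ℕ} {R : Type*} [CommRing R] {D : Fin 3 → ℕ}
    (M : Matrix (Fin k) (Fin k) (MvPolynomial (Fin 3) R))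
    (h : ∀ a b, Deg D (M a b)) : Deg (fun i => k * D i) M.det := by
  rw [Matrix.det_apply']
  refine Deg.sum _ _ fun σ _ => ?_
  intro e he
  have h1 : ((((Equiv.Perm.sign σ : ℤˣ) : ℤ)) : MvPolynomial (Fin 3) R) =
        C ((((Equiv.Perm.sign σ : ℤˣ) : ℤ)) : R) := by simp
  rw [h1, coeff_C_mul] at he
  exact Deg.prod _ (fun i => h _ _) e (right_ne_zero_of_mul he)

lemma Deg.op {R : Type*} [CommRing R] {D : Fin 3 → ℕ} {P : MvPolynomial (Fin 3) R} (h : Deg D P)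
    (g : Ex → ℕ) : Deg D (op g P) := by
  intro e he
  rw [coeff_op] at he
  exact h e (right_ne_zero_of_mul he)

lemma coeff_mul_sep {R : Type*} [CommRing R] (U V : MvPolynomial (Fin 3) R) (s : Fin 3)
    (hU : ∀ e, coeff e U ≠ 0 → e s = 0) (hV : ∀ e, coeff e V ≠ 0 → ∀ i, i ≠ s → e i = 0)
    (e : Ex) (he : e s = 0) (j : ℕ) :
    coeff (e + Finsupp.single s j) (U * V) = coeff e U * coeff (Finsupp.single s j) V := by
  classical
  rw [coeff_mul, Finset.sum_eq_single (e, Finsupp.single s j)]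
  · intro x hx hne
    rw [Finset.HasAntidiagonal.mem_antidiagonal] at hx
    by_contra h
    have h1 := hU _ (left_ne_zero_of_mul h)
    have h2 := hV _ (right_ne_zero_of_mul h)
    apply hne
    have h3 : ∀ i, x.1 i + x.2 i = e i + (Finsupp.single s j : Ex) i := fun i => by
      rw [← Finsupp.add_apply, hx, Finsupp.add_apply]
    ext i
    · by_cases hi : i = s
      · subst hi; simp [h1, he]
      · have := h3 i
        rw [h2 i hi, Finsupp.single_eq_of_ne hi] at this
        simpa using this
    · by_cases hi : i = s
      · subst hi; have := h3 i; rw [h1, he] at this; simpa using this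
      · have := h3 i
        rw [Finsupp.single_eq_of_ne hi] at this ⊢
        exact h2 i hi
  · intro h; exact absurd (by rw [Finset.HasAntidiagonal.mem_antidiagonal]) h

end RothAux

namespace RothAux
open MvPolynomial

noncomputable abbrev toR (P : MvPolynomial (Fin 3) ℤ) : MvPolynomial (Fin 3) ℝ :=
  map (Int.castRingHom ℝ) P

lemma coeff_toR (P : MvPolynomial (Fin 3) ℤ) (e : Ex) : coeff e (toR P) = ((coeff e P : ℤ) : ℝ) := by
  simp [toR, coeff_map]

lemma toR_ne_zero {P : MvPolynomial (Fin 3) ℤ} (h : P ≠ 0) : toR P ≠ 0 := by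
  intro h0
  apply h
  ext e
  have := congrArg (coeff e) h0
  rw [coeff_toR, coeff_zero] at this
  rw [coeff_zero]
  exact_mod_cast this

lemma exists_int_poly (Q : MvPolynomial (Fin 3) ℝ) (h : ∀ e, ∃ z : ℤ, coeff e Q = z) :
    ∃ P : MvPolynomial (Fin 3) ℤ, toR P = Q := by
  choose z hz using h
  refine ⟨∑ e ∈ Q.support, monomial e (z e), ?_⟩
  rw [toR, map_sum]
  conv_rhs => rw [Q.as_sum]
  refine Finset.sum_congr rfl fun e _ => ?_
  rw [map_monomial, hz]; simp

lemma factorization (P : MvPolynomial (Fin 3) ℝ) (hP0 : P ≠ 0) (D : Fin 3 → ℕ) (hD : Deg D P)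
    (s : Fin 3) : ∃ (k : ℕ) (φ ψ : Fin k → MvPolynomial (Fin 3) ℝ), 1 ≤ k ∧ k ≤ D s + 1 ∧
      LinearIndependent ℝ φ ∧ LinearIndependent ℝ ψ ∧
      (∀ j e, coeff e (φ j) ≠ 0 → e s = 0 ∧ ∀ i, e i ≤ D i) ∧
      (∀ j e, coeff e (ψ j) ≠ 0 → e s ≤ D s ∧ ∀ i, i ≠ s → e i = 0) ∧ P = ∑ j, φ j * ψ j := by
  classical
  let sl : Fin (D s + 1) → MvPolynomial (Fin 3) ℝ := fun f =>
    ∑ e ∈ P.support.filter (fun e => e s = (f : ℕ)), monomial (e.erase s) (coeff e P)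
  have hPsl : P = ∑ f, sl f * monomial (Finsupp.single s (f : ℕ)) 1 := by
    conv_lhs => rw [P.as_sum]
    have hmaps : ∀ e ∈ P.support, (⟨min (e s) (D s), by omega⟩ : Fin (D s + 1)) ∈ Finset.univ :=
      fun e _ => Finset.mem_univ _
    rw [← Finset.sum_fiberwise_of_maps_to hmaps]
    refine Finset.sum_congr rfl fun f _ => ?_
    simp only [sl, Finset.sum_mul]
    refine Finset.sum_congr ?_ ?_
    · ext e
      simp only [Finset.mem_filter, and_congr_right_iff]
      intro he
      have := hD e (mem_support_iff.mp he) s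
      rw [Fin.ext_iff]
      simp only []
      rw [min_eq_left this]
    · intro e he
      rw [Finset.mem_filter] at he
      rw [monomial_mul, mul_one, ← he.2, Finsupp.erase_add_single]
  let S := Submodule.span ℝ (Set.range sl)
  have : Module.Finite ℝ S := Module.Finite.span_of_finite ℝ (Set.finite_range sl)
  let k := Module.finrank ℝ S
  let b : Module.Basis (Fin k) ℝ S := Module.finBasis ℝ S
  have hsl : ∀ f, sl f ∈ S := fun f => Submodule.subset_span ⟨f, rfl⟩
  let B : Fin (D s + 1) → Fin k → ℝ := fun f j => b.repr ⟨sl f, hsl f⟩ j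
  have hB : ∀ f, sl f = ∑ j, B f j • (b j : MvPolynomial (Fin 3) ℝ) := by
    intro f
    have := congrArg Subtype.val (b.sum_repr ⟨sl f, hsl f⟩)
    simp only [Submodule.coe_sum, Submodule.coe_smul] at this
    exact this.symm
  let ψ : Fin k → MvPolynomial (Fin 3) ℝ := fun j => ∑ f, B f j • monomial (Finsupp.single s (f : ℕ)) 1
  have hψc : ∀ j (f : Fin (D s + 1)), coeff (Finsupp.single s (f : ℕ)) (ψ j) = B f j := by
    intro j f
    simp only [ψ, coeff_sum, coeff_smul, coeff_monomial, smul_eq_mul]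
    rw [Finset.sum_eq_single f]
    · simp
    · intro f' _ hne
      rw [if_neg, mul_zero]
      intro h
      exact hne (Fin.ext (Finsupp.single_injective s h))
    · simp
  have hSp : ∀ Q ∈ S, ∀ e, coeff e Q ≠ 0 → e s = 0 ∧ ∀ i, e i ≤ D i := by
    intro Q hQ
    induction hQ using Submodule.span_induction with
    | mem x hx =>
      obtain ⟨f, rfl⟩ := hx
      intro e he
      simp only [sl, coeff_sum] at he
      obtain ⟨e', he', hne⟩ := Finset.exists_ne_zero_of_sum_ne_zero he
      rw [Finset.mem_filter, mem_support_iff] at he'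
      rw [coeff_monomial] at hne
      split_ifs at hne with h
      · rw [← h]
        refine ⟨Finsupp.erase_same, fun i => ?_⟩
        have := hD e' he'.1 i
        rw [Finsupp.erase_apply]
        split_ifs <;> omega
      · exact absurd rfl hne
    | zero => intro e he; simp at he
    | add x y _ _ hx hy =>
      intro e he
      rw [coeff_add] at he
      by_cases h : coeff e x = 0
      · exact hy e fun h' => he (by rw [h, h', add_zero])
      · exact hx e h
    | smul a x _ hx =>
      intro e he
      exact hx e fun h => he (by rw [coeff_smul, h, smul_zero])
  have hk : 1 ≤ k := by
    by_contra h
    have hk0 : Module.finrank ℝ S = 0 := by omega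
    rw [Submodule.finrank_eq_zero] at hk0
    apply hP0
    rw [hPsl]
    refine Finset.sum_eq_zero fun f _ => ?_
    have := hsl f
    rw [hk0, Submodule.mem_bot] at this
    rw [this, zero_mul]
  refine ⟨k, fun j => (b j : MvPolynomial (Fin 3) ℝ), ψ, hk, ?_, ?_, ?_, ?_, ?_, ?_⟩
  · have := finrank_range_le_card (R := ℝ) sl
    rw [Fintype.card_fin] at this
    exact this
  · exact b.linearIndependent.map' S.subtype (Submodule.ker_subtype S)
  · rw [Fintype.linearIndependent_iff]
    intro c hc
    have h1 : ∀ f, ∑ j, c j * B f j = 0 := by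
      intro f
      have := congrArg (coeff (Finsupp.single s (f : ℕ))) hc
      simpa only [coeff_sum, coeff_smul, hψc, smul_eq_mul, coeff_zero] using this
    let F : S →ₗ[ℝ] ℝ := b.constr ℝ c
    have hF : F = 0 := by
      have hker : S ≤ (LinearMap.ker F).map S.subtype := by
        refine Submodule.span_le.mpr ?_
        rintro _ ⟨f, rfl⟩
        refine ⟨⟨sl f, hsl f⟩, ?_, rfl⟩
        simp only [SetLike.mem_coe, LinearMap.mem_ker, F, Module.Basis.constr_apply_fintype, smul_eq_mul]
        rw [← h1 f]
        refine Finset.sum_congr rfl fun j _ => ?_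
        rw [mul_comm]; rfl
      ext ⟨x, hx⟩
      obtain ⟨y, hy, hyx⟩ := hker hx
      have : y = ⟨x, hx⟩ := Subtype.ext hyx
      rw [← this]; exact hy
    intro j
    have : F (b j) = c j := b.constr_basis ℝ c j
    rw [← this, hF]; rfl
  · exact fun j e he => hSp _ (b j).2 e he
  · intro j e he
    simp only [ψ, coeff_sum, coeff_smul, coeff_monomial, smul_eq_mul] at he
    obtain ⟨f, -, hne⟩ := Finset.exists_ne_zero_of_sum_ne_zero he
    split_ifs at hne with h
    · rw [← h]
      refine ⟨?_, fun i hi => Finsupp.single_eq_of_ne hi⟩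
      rw [Finsupp.single_eq_same]; have := f.2; omega
    · simp at hne
  · conv_lhs => rw [hPsl]
    simp only [ψ, Finset.mul_sum]
    rw [Finset.sum_comm]
    refine Finset.sum_congr rfl fun f _ => ?_
    rw [hB f, Finset.sum_mul]
    refine Finset.sum_congr rfl fun j _ => ?_
    rw [smul_mul_assoc, mul_smul_comm]

end RothAux

namespace RothAux
open MvPolynomial

lemma lam_single (s : Fin 3) (e : Ex) : lam (Pi.single s 1) e = e s := by
  simp [lam, Pi.single_apply]

lemma op_mul_sep (φ ψ : MvPolynomial (Fin 3) ℝ) (s : Fin 3) (l : Fin 3 → ℕ) (hl : l s = 0)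
    (hφ : ∀ e, coeff e φ ≠ 0 → e s = 0) (hψ : ∀ e, coeff e ψ ≠ 0 → ∀ i, i ≠ s → e i = 0) (a b : ℕ) :
    op (fun x => (lam l x).choose a * (x s).choose b) (φ * ψ) =
      op (fun x => (lam l x).choose a) φ * op (fun x => (x s).choose b) ψ := by
  have hφs := φ.as_sum
  have hψs := ψ.as_sum
  conv_lhs => rw [hφs, hψs]
  conv_rhs => rw [hφs, hψs]
  simp only [Finset.sum_mul, map_sum, Finset.mul_sum, op_monomial]
  refine Finset.sum_congr rfl fun e he => Finset.sum_congr rfl fun e' he' => ?_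
  rw [monomial_mul, op_monomial, monomial_mul]
  have h1 : (e' + e) s = e s := by
    rw [Finsupp.add_apply, hφ e' (mem_support_iff.mp he'), zero_add]
  have h2 : lam l (e' + e) = lam l e' := by
    refine Finset.sum_congr rfl fun i _ => ?_
    by_cases hi : i = s
    · subst hi; simp [hl]
    · rw [Finsupp.add_apply, hψ e (mem_support_iff.mp he) i hi, add_zero]
  rw [h1, h2]
  congr 1
  push_cast; ring

lemma step (P : MvPolynomial (Fin 3) ℤ) (hP0 : P ≠ 0) (D : Fin 3 → ℕ) (hD : Deg D P) (s : Fin 3)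
    (l : Fin 3 → ℕ) (hls : l s = 0) (hinj : Set.InjOn (lam l) {e | e s = 0 ∧ ∀ i, e i ≤ D i})
    (M : ℕ) (hM : ∀ e : Ex, (∀ i, e i ≤ D i) → ∀ a b, a ≤ D s → b ≤ D s →
      (lam l e).choose a * (e s).choose b ≤ M) :
    ∃ (k : ℕ) (U V : MvPolynomial (Fin 3) ℤ), 1 ≤ k ∧ k ≤ D s + 1 ∧ U ≠ 0 ∧ V ≠ 0 ∧
      Deg (fun i => k * D i) U ∧ (∀ e, coeff e U ≠ 0 → e s = 0) ∧
      (∀ e, coeff e V ≠ 0 → ∀ i, i ≠ s → e i = 0) ∧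
      len U ≤ (k * (M * len P)) ^ k ∧ len V ≤ (k * (M * len P)) ^ k ∧
      ∀ (ξ w : Fin 3 → ℝ) (ω e : ℝ), (∀ i, 0 ≤ w i) → 0 ≤ ω → (∀ i, l i ≠ 0 → w i ≤ ω) →
        Idx ξ w e (toR P) →
        Idx ξ w (∑ b : Fin k, max 0 (e - (k - 1) * ω - (b : ℕ) * w s)) (toR U * toR V) := by
  classical
  have hDR : Deg D (toR P) := fun e he => hD e fun h => he (by rw [coeff_toR, h]; simp)
  obtain ⟨k, φ, ψ, hk1, hk2, hφi, hψi, hφ, hψ, hfac⟩ :=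
    factorization (toR P) (toR_ne_zero hP0) D hDR s
  let W : Matrix (Fin k) (Fin k) (MvPolynomial (Fin 3) ℤ) :=
    Matrix.of fun a b => op (fun x => (lam l x).choose (a : ℕ) * (x s).choose (b : ℕ)) P
  let Φ : Matrix (Fin k) (Fin k) (MvPolynomial (Fin 3) ℝ) :=
    Matrix.of fun a j => op (fun x => (lam l x).choose (a : ℕ)) (φ j)
  let Ψ : Matrix (Fin k) (Fin k) (MvPolynomial (Fin 3) ℝ) :=
    Matrix.of fun b j => op (fun x => (x s).choose (b : ℕ)) (ψ j)
  have hWR : (map (Int.castRingHom ℝ)).mapMatrix W =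
      Matrix.of fun a b : Fin k => op (fun x => (lam l x).choose (a : ℕ) * (x s).choose (b : ℕ)) (toR P) := by
    ext1 a b
    simp [W, map_op]
  have hWprod : (map (Int.castRingHom ℝ)).mapMatrix W = Φ * Ψ.transpose := by
    rw [hWR]
    ext1 a b
    rw [Matrix.mul_apply, Matrix.of_apply]
    conv_lhs => rw [hfac, map_sum]
    refine Finset.sum_congr rfl fun j _ => ?_
    exact op_mul_sep _ _ s l hls (fun e he => (hφ j e he).1) (fun e he => (hψ j e he).2) _ _
  have hUV : toR W.det = Φ.det * Ψ.det := by
    rw [toR, RingHom.map_det, hWprod, Matrix.det_mul, Matrix.det_transpose]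
  have hU0 : Φ.det ≠ 0 := mv_wronskian φ hφi l _ hinj hφ
  have hV0 : Ψ.det ≠ 0 := by
    have := mv_wronskian ψ hψi (Pi.single s 1) {e | ∀ i, i ≠ s → e i = 0} (by
      intro e he e' he' h
      rw [lam_single, lam_single] at h
      ext i
      by_cases hi : i = s
      · rw [hi, h]
      · rw [he i hi, he' i hi]) (fun j e he => (hψ j e he).2)
    simpa only [lam_single] using this
  have hUs : ∀ e, coeff e Φ.det ≠ 0 → e s = 0 := by
    intro e he
    have := Deg.det (D := fun i => if i = s then 0 else D i) Φ (by
      intro a j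
      refine Deg.op ?_ _
      intro e he i
      have := hφ j e he
      simp only []
      split_ifs with h
      · rw [h, this.1]
      · exact this.2 i) e he s
    simpa using this
  have hVs : ∀ e, coeff e Ψ.det ≠ 0 → ∀ i, i ≠ s → e i = 0 := by
    intro e he i hi
    have := Deg.det (D := fun i => if i = s then D s else 0) Ψ (by
      intro a j
      refine Deg.op ?_ _
      intro e he i
      have := hψ j e he
      simp only []
      split_ifs with h
      · rw [h]; exact this.1
      · rw [this.2 i h]) e he i
    simpa [hi] using this
  have hWD : Deg (fun i => k * D i) W.det := Deg.det _ fun a b => hD.op _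
  have hWlen : len W.det ≤ (k * (M * len P)) ^ k := by
    refine len_det_le _ _ fun a b => len_op_le _ _ _ fun e he => ?_
    exact hM e (hD e he) a b (by have := a.2; omega) (by have := b.2; omega)
  have hsep := coeff_mul_sep Φ.det Ψ.det s hUs hVs
  -- choose nonzero coefficients
  obtain ⟨e0, he0⟩ := MvPolynomial.ne_zero_iff.mp hU0
  obtain ⟨f0, hf0⟩ := MvPolynomial.ne_zero_iff.mp hV0
  have hf0' : f0 = Finsupp.single s (f0 s) := by
    ext i
    by_cases hi : i = s
    · rw [hi]; simp
    · rw [hVs f0 hf0 i hi, Finsupp.single_eq_of_ne hi]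
  set u := coeff e0 Φ.det with hu
  set v := coeff f0 Ψ.det with hv
  set c := f0 s with hc
  have hUc : ∀ e, e s = 0 → v * coeff e Φ.det = ((coeff (e + Finsupp.single s c) W.det : ℤ) : ℝ) := by
    intro e he
    rw [← coeff_toR, hUV, hsep e he, ← hf0', mul_comm]
  have hVc : ∀ j, u * coeff (Finsupp.single s j) Ψ.det =
      ((coeff (e0 + Finsupp.single s j) W.det : ℤ) : ℝ) := by
    intro j
    rw [← coeff_toR, hUV, hsep e0 (hUs e0 he0)]
  obtain ⟨U, hU⟩ := exists_int_poly (v • Φ.det) (by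
    intro e
    rw [coeff_smul, smul_eq_mul]
    by_cases he : coeff e Φ.det = 0
    · exact ⟨0, by rw [he]; simp⟩
    · exact ⟨_, hUc e (hUs e he)⟩)
  obtain ⟨V, hV⟩ := exists_int_poly (u • Ψ.det) (by
    intro e
    rw [coeff_smul, smul_eq_mul]
    by_cases he : coeff e Ψ.det = 0
    · exact ⟨0, by rw [he]; simp⟩
    · have : e = Finsupp.single s (e s) := by
        ext i
        by_cases hi : i = s
        · rw [hi]; simp
        · rw [hVs e he i hi, Finsupp.single_eq_of_ne hi]
      rw [this]
      exact ⟨_, hVc _⟩)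
  have hUco : ∀ e, ((coeff e U : ℤ) : ℝ) = v * coeff e Φ.det := fun e => by
    rw [← coeff_toR, hU, coeff_smul, smul_eq_mul]
  have hVco : ∀ e, ((coeff e V : ℤ) : ℝ) = u * coeff e Ψ.det := fun e => by
    rw [← coeff_toR, hV, coeff_smul, smul_eq_mul]
  have hUs' : ∀ e, coeff e U ≠ 0 → e s = 0 := by
    intro e he
    refine hUs e fun h => he ?_
    have := hUco e
    rw [h, mul_zero] at this
    exact_mod_cast this
  have hVs' : ∀ e, coeff e V ≠ 0 → ∀ i, i ≠ s → e i = 0 := by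
    intro e he
    refine hVs e fun h => he ?_
    have := hVco e
    rw [h, mul_zero] at this
    exact_mod_cast this
  have hUW : ∀ e, e s = 0 → coeff e U = coeff (e + Finsupp.single s c) W.det := by
    intro e he
    have := (hUco e).trans (hUc e he)
    exact_mod_cast this
  have hVW : ∀ j, coeff (Finsupp.single s j) V = coeff (e0 + Finsupp.single s j) W.det := by
    intro j
    have := (hVco _).trans (hVc j)
    exact_mod_cast this
  refine ⟨k, U, V, hk1, hk2, ?_, ?_, ?_, hUs', hVs', ?_, ?_, ?_⟩
  · intro h
    have := hUco e0
    rw [h, coeff_zero] at this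
    simp only [Int.cast_zero] at this
    exact mul_ne_zero hf0 he0 this.symm
  · intro h
    have := hVco f0
    rw [h, coeff_zero] at this
    simp only [Int.cast_zero] at this
    exact mul_ne_zero he0 hf0 this.symm
  · intro e he i
    have h1 := hUW e (hUs' e he)
    rw [h1] at he
    have := hWD _ he i
    rw [Finsupp.add_apply] at this
    exact le_trans (Nat.le_add_right _ _) this
  · refine le_trans ?_ hWlen
    rw [len, Finset.sum_congr rfl (fun e he => by
      rw [hUW e (hUs' e (mem_support_iff.mp he))])]
    rw [← Finset.sum_image (g := fun e => e + Finsupp.single s c)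
      (f := fun e => (coeff e W.det).natAbs) (by
        intro a _ b _ h; exact add_right_cancel h)]
    exact sum_le_len _ _
  · refine le_trans ?_ hWlen
    have hsingle : ∀ e ∈ V.support, e = Finsupp.single s (e s) := by
      intro e he
      ext i
      by_cases hi : i = s
      · rw [hi]; simp
      · rw [hVs' e (mem_support_iff.mp he) i hi, Finsupp.single_eq_of_ne hi]
    rw [len, Finset.sum_congr rfl (g := fun e => (coeff (e0 + e) W.det).natAbs) (fun e he => by
      rw [hsingle e he, hVW])]
    rw [← Finset.sum_image (g := fun e => e0 + e)
      (f := fun e => (coeff e W.det).natAbs) (by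
        intro a _ b _ h; exact add_left_cancel h)]
    exact sum_le_len _ _
  · intro ξ w ω e hw hω hlw hidx
    have h1 : Idx ξ w (∑ b : Fin k, max 0 (e - (k - 1) * ω - (b : ℕ) * w s)) (toR W.det) := by
      rw [toR, RingHom.map_det, hWR]
      refine Idx.det hw _ _ fun a b => ?_
      rw [Matrix.of_apply]
      rcases max_cases 0 (e - (k - 1) * ω - (b : ℕ) * w s) with h | h
      · rw [h.1]; exact Idx.of_nonpos hw le_rfl _
      · rw [h.1, ← op_op]
        have h2 := hidx.op_choose hw (hw s) (Pi.single s 1) (by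
          intro i hi
          rw [Pi.single_apply] at hi
          split_ifs at hi with h'
          · rw [h']
          · exact absurd rfl hi) (b : ℕ)
        simp only [lam_single] at h2
        refine (h2.op_choose hw hω l hlw a).mono ?_
        have : ((a : ℕ) : ℝ) ≤ k - 1 := by
          have := a.2
          have : ((a : ℕ) : ℝ) + 1 ≤ k := by exact_mod_cast this
          linarith
        nlinarith
    have h2 := h1.smul (v * u)
    rw [hU, hV]
    convert h2 using 1
    rw [hUV, smul_mul_smul_comm]

end RothAux

namespace RothAux
open MvPolynomial

lemma X_add_C_pow (s : Fin 3) (c : ℝ) (n : ℕ) :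
    (X s + C c : MvPolynomial (Fin 3) ℝ) ^ n =
      ∑ j ∈ Finset.range (n + 1), monomial (Finsupp.single s j) ((n.choose j : ℝ) * c ^ (n - j)) := by
  rw [add_pow]
  refine Finset.sum_congr rfl fun j _ => ?_
  rw [X_pow_eq_monomial, ← C_pow, ← map_natCast (C : ℝ →+* MvPolynomial (Fin 3) ℝ), mul_assoc, ← C_mul,
    mul_comm, C_mul_monomial]
  congr 1; ring

lemma coeff_prod_uni (t : Fin 3 → ℕ) (f : Fin 3 → ℕ → ℝ) (hf : ∀ s j, t s < j → f s j = 0) (i : Ex) :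
    coeff i (∏ s, ∑ j ∈ Finset.range (t s + 1), monomial (Finsupp.single s j) (f s j)) = ∏ s, f s (i s) := by
  classical
  rw [Finset.prod_univ_sum, coeff_sum]
  have h1 : ∀ x : Fin 3 → ℕ, (∏ s, monomial (Finsupp.single s (x s)) (f s (x s)) : MvPolynomial (Fin 3) ℝ)
      = monomial (Finsupp.equivFunOnFinite.symm x) (∏ s, f s (x s)) := by
    intro x
    rw [← monomial_sum_prod]
    have h2 : (∑ s, Finsupp.single s (x s) : Ex) = Finsupp.equivFunOnFinite.symm x := by
      ext s
      simp [Finsupp.finsetSum_apply, Finsupp.single_apply]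
    rw [h2]
  simp only [h1, coeff_monomial]
  by_cases hi : ∀ s, i s ≤ t s
  · rw [Finset.sum_eq_single (fun s => i s)]
    · rw [if_pos]; ext s; simp
    · intro b _ hb
      rw [if_neg]
      intro h; apply hb; funext s; rw [← h]; simp
    · intro h; exact absurd (Fintype.mem_piFinset.mpr fun s => Finset.mem_range.mpr (Nat.lt_succ_of_le (hi s))) h
  · push Not at hi
    obtain ⟨s, hs⟩ := hi
    rw [Finset.prod_eq_zero (Finset.mem_univ s) (hf s _ hs)]
    refine Finset.sum_eq_zero fun x hx => ?_
    rw [if_neg]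
    intro h
    have := Finset.mem_range.mp (Fintype.mem_piFinset.mp hx s)
    rw [← h] at hs
    simp at hs
    omega

lemma coeff_shift_monomial (ξ : Fin 3 → ℝ) (e i : Ex) (a : ℝ) :
    coeff i (shift ξ (monomial e a)) = a * ∏ s, (((e s).choose (i s) : ℝ) * ξ s ^ (e s - i s)) := by
  rw [shift, aeval_monomial, algebraMap_eq, coeff_C_mul, Finsupp.prod_fintype _ _ (fun _ => pow_zero _)]
  congr 1
  simp only [X_add_C_pow]
  exact coeff_prod_uni e (fun s j => ((e s).choose j : ℝ) * ξ s ^ (e s - j)) (fun s j h => by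
    rw [Nat.choose_eq_zero_of_lt h]; simp) i

lemma coeff_shift (ξ : Fin 3 → ℝ) (P : MvPolynomial (Fin 3) ℝ) (i : Ex) :
    coeff i (shift ξ P) = ∑ e ∈ P.support, coeff e P * ∏ s, (((e s).choose (i s) : ℝ) * ξ s ^ (e s - i s)) := by
  conv_lhs => rw [P.as_sum]
  rw [map_sum, coeff_sum]
  exact Finset.sum_congr rfl fun e _ => coeff_shift_monomial _ _ _ _

lemma shift_le (ξ : Fin 3 → ℝ) (P : MvPolynomial (Fin 3) ℝ) (i : Ex) (h : coeff i (shift ξ P) ≠ 0) :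
    ∃ e, coeff e P ≠ 0 ∧ i ≤ e := by
  rw [coeff_shift] at h
  obtain ⟨e, he, hne⟩ := Finset.exists_ne_zero_of_sum_ne_zero h
  refine ⟨e, mem_support_iff.mp he, fun s => ?_⟩
  by_contra hs
  push Not at hs
  apply hne
  rw [Finset.prod_eq_zero (Finset.mem_univ s), mul_zero]
  rw [Nat.choose_eq_zero_of_lt hs]; simp

lemma uni_bound (V : MvPolynomial (Fin 3) ℤ) (hV : V ≠ 0) (s : Fin 3)
    (hs : ∀ e, coeff e V ≠ 0 → ∀ i, i ≠ s → e i = 0) (ξ : Fin 3 → ℝ) (p q : ℤ) (hq : 0 < q)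
    (hpq : IsCoprime p q) (hξ : ξ s = p / q) :
    ∃ j : ℕ, coeff (Finsupp.single s j) (shift ξ (toR V)) ≠ 0 ∧ q ^ j ≤ (len V : ℤ) := by
  classical
  let v : Polynomial ℤ := ∑ e ∈ V.support, Polynomial.monomial (e s) (coeff e V)
  have hsingle : ∀ e, coeff e V ≠ 0 → e = Finsupp.single s (e s) := by
    intro e he
    ext i
    by_cases h : i = s
    · subst h; simp
    · rw [hs e he i h, Finsupp.single_apply, if_neg (Ne.symm h)]
  have hcoeff : ∀ j, v.coeff j = coeff (Finsupp.single s j) V := by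
    intro j
    simp only [v, Polynomial.finsetSum_coeff, Polynomial.coeff_monomial]
    rw [Finset.sum_eq_single (Finsupp.single s j)]
    · simp
    · intro b hb hne
      rw [if_neg]
      rintro rfl
      exact hne (hsingle b (mem_support_iff.mp hb))
    · intro h; rw [notMem_support_iff.mp h]; simp
  have hv0 : v ≠ 0 := by
    obtain ⟨e, he⟩ := ne_zero_iff.mp hV
    intro h
    apply he
    rw [hsingle e he, ← hcoeff, h]; simp
  have htaylor : ∀ j, coeff (Finsupp.single s j) (shift ξ (toR V)) =
      (Polynomial.taylor (ξ s) (v.map (Int.castRingHom ℝ))).coeff j := by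
    intro j
    rw [Polynomial.taylor_coeff]
    simp only [v, Polynomial.map_sum, Polynomial.map_monomial, map_sum, Polynomial.hasseDeriv_monomial, Polynomial.eval_finsetSum, Polynomial.eval_monomial]
    conv_lhs => rw [toR, V.as_sum]
    rw [map_sum, map_sum, coeff_sum]
    refine Finset.sum_congr rfl fun e he => ?_
    rw [map_monomial, coeff_shift_monomial, Finset.prod_eq_single s]
    · simp; ring
    · intro b _ hb
      rw [hs e (mem_support_iff.mp he) b hb, Finsupp.single_apply, if_neg (Ne.symm hb)]; simp
    · simp
  set x : ℚ := (p : ℚ) / q with hx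
  have hxξ : ξ s = (x : ℝ) := by rw [hξ, hx]; push_cast; rfl
  set vQ : Polynomial ℚ := v.map (Int.castRingHom ℚ) with hvQ
  have hvQ0 : vQ ≠ 0 := by
    rw [hvQ, Ne, Polynomial.map_eq_zero_iff (RingHom.injective_int _)]; exact hv0
  have hvR : v.map (Int.castRingHom ℝ) = vQ.map (algebraMap ℚ ℝ) := by
    rw [hvQ, Polynomial.map_map]; congr 1
  obtain ⟨g, hg, hgx⟩ := Polynomial.exists_eq_pow_rootMultiplicity_mul_and_not_dvd vQ hvQ0 x
  set j := Polynomial.rootMultiplicity x vQ with hj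
  refine ⟨j, ?_, ?_⟩
  · have hgx' : g.eval x ≠ 0 := fun h => hgx (Polynomial.dvd_iff_isRoot.mpr h)
    rw [htaylor, hvR, hg, hxξ, Polynomial.map_mul, Polynomial.taylor_mul, Polynomial.map_pow, Polynomial.map_sub,
      Polynomial.map_X, Polynomial.map_C, Polynomial.taylor_pow]
    have : Polynomial.taylor (x : ℝ) (Polynomial.X - Polynomial.C ((algebraMap ℚ ℝ) x)) = Polynomial.X := by
      rw [map_sub, Polynomial.taylor_X, Polynomial.taylor_C]; simp
    rw [this, Polynomial.coeff_X_pow_mul', if_pos le_rfl, Nat.sub_self, Polynomial.taylor_coeff_zero]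
    have h2 : Polynomial.eval (x : ℝ) (g.map (algebraMap ℚ ℝ)) = ((g.eval x : ℚ) : ℝ) := by
      have := Polynomial.eval_map_algebraMap (B := ℝ) g (x : ℝ)
      rw [this]
      have := Polynomial.aeval_algebraMap_apply_eq_algebraMap_eval (A := ℝ) x g
      simpa using this
    rw [h2]
    exact_mod_cast hgx'
  · have hprim : (Polynomial.C q * Polynomial.X - Polynomial.C p : Polynomial ℤ).IsPrimitive := by
      rw [Polynomial.isPrimitive_iff_isUnit_of_C_dvd]
      intro r hr
      rw [Polynomial.C_dvd_iff_dvd_coeff] at hr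
      have h0 := hr 0
      have h1 := hr 1
      rw [Polynomial.coeff_sub, Polynomial.coeff_C_mul, Polynomial.coeff_C] at h0 h1
      simp at h0 h1
      exact hpq.isUnit_of_dvd' h0 h1
    have hprimj : ((Polynomial.C q * Polynomial.X - Polynomial.C p : Polynomial ℤ) ^ j).IsPrimitive := by
      clear_value j
      clear hg hj
      induction j with
      | zero => rw [pow_zero]; exact Polynomial.isPrimitive_one
      | succ j ih => rw [pow_succ]; exact ih.mul hprim
    have hq0 : (q : ℚ) ≠ 0 := by exact_mod_cast hq.ne'
    have hdvd : (Polynomial.C q * Polynomial.X - Polynomial.C p : Polynomial ℤ) ^ j ∣ v := by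
      rw [Polynomial.IsPrimitive.Int.dvd_iff_map_cast_dvd_map_cast _ _ hprimj]
      have e1 : ((Polynomial.C q * Polynomial.X - Polynomial.C p : Polynomial ℤ) ^ j).map (Int.castRingHom ℚ) =
          Polynomial.C ((q:ℚ) ^ j) * (Polynomial.X - Polynomial.C x) ^ j := by
        rw [Polynomial.map_pow, Polynomial.C_pow, ← mul_pow]
        congr 1
        simp only [Polynomial.map_sub, Polynomial.map_mul, Polynomial.map_C, Polynomial.map_X, mul_sub, ← Polynomial.C_mul, hx]
        rw [mul_div_cancel₀ _ hq0]; simp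
      have e4 : (Polynomial.X - Polynomial.C x) ^ j ∣ vQ := ⟨g, hg⟩
      have hu : IsUnit (Polynomial.C ((q:ℚ) ^ j)) := Polynomial.isUnit_C.mpr (isUnit_iff_ne_zero.mpr (pow_ne_zero _ hq0))
      rw [e1, hu.mul_left_dvd]
      exact e4
    obtain ⟨h, hh⟩ := hdvd
    have hlc : v.leadingCoeff = q ^ j * h.leadingCoeff := by
      rw [hh, Polynomial.leadingCoeff_mul, Polynomial.leadingCoeff_pow]
      congr 2
      have := Polynomial.leadingCoeff_linear (R := ℤ) (a := q) (b := -p) hq.ne'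
      rwa [Polynomial.C_neg, ← sub_eq_add_neg] at this
    have h1 : (v.leadingCoeff).natAbs ≤ len V := by
      rw [Polynomial.leadingCoeff, hcoeff]
      have := sum_le_len V {Finsupp.single s v.natDegree}
      simpa using this
    have h2 : q ^ j ≤ |v.leadingCoeff| := by
      have hh0 : h.leadingCoeff ≠ 0 := by
        intro h0; apply hv0
        rw [← Polynomial.leadingCoeff_eq_zero, hlc, h0, mul_zero]
      rw [hlc, abs_mul, abs_of_pos (pow_pos hq j)]
      exact le_mul_of_one_le_right (pow_pos hq j).le (Int.one_le_abs hh0)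
    rw [Int.abs_eq_natAbs] at h2
    exact h2.trans (by exact_mod_cast h1)

lemma sum_max (η : ℝ) (hη : 0 < η) (hη1 : η ≤ 1) (N k : ℕ) (hN : 1 ≤ N) (hk : 1 ≤ k) (hkN : k ≤ N + 1) :
    k * η ^ 2 / 8 ≤ ∑ b : Fin k, max 0 (η - (b : ℕ) * (1 / N : ℝ)) := by
  rw [Fin.sum_univ_eq_sum_range (fun b => max 0 (η - (b : ℕ) * (1 / N : ℝ))) k]
  have hN' : (1:ℝ) ≤ N := by exact_mod_cast hN
  have hk' : (1:ℝ) ≤ k := by exact_mod_cast hk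
  have hkN' : (k:ℝ) ≤ N + 1 := by exact_mod_cast hkN
  have hkη : (0:ℝ) ≤ k * η := by positivity
  set m := ⌈k * η / 4⌉₊ with hm
  have hmk : m ≤ k := by
    rw [hm, Nat.ceil_le]; nlinarith
  have hm1 : k * η / 4 ≤ m := Nat.le_ceil _
  have hm2 : (m:ℝ) < k * η / 4 + 1 := Nat.ceil_lt_add_one (by positivity)
  have : ∑ b ∈ Finset.range m, η / 2 ≤ ∑ b ∈ Finset.range k, max 0 (η - (b : ℕ) * (1 / N : ℝ)) := by
    refine (Finset.sum_le_sum ?_).trans (Finset.sum_le_sum_of_subset_of_nonneg (Finset.range_subset_range.mpr hmk) fun _ _ _ => le_max_left _ _)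
    intro b hb
    have hb' : (b:ℝ) + 1 ≤ m := by exact_mod_cast Finset.mem_range.mp hb
    refine le_max_of_le_right ?_
    have h3 : (b:ℝ) * (1 / N) ≤ η / 2 := by
      rw [mul_one_div, div_le_iff₀ (by linarith)]
      nlinarith
    linarith
  refine le_trans ?_ this
  simp only [Finset.sum_const, Finset.card_range, nsmul_eq_mul]
  nlinarith

end RothAux

namespace RothAux
open MvPolynomial

lemma powlem (A q0 q : ℤ) (G D0 j m r : ℕ) (hA : 2 ≤ A) (hq0 : A ^ G ≤ q0) (hD0 : 0 < D0)
    (hr : q0 ^ D0 ≤ q ^ r) (hq : 0 < q) (h : q ^ j ≤ A ^ (D0 * m)) : G * j ≤ m * r := by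
  have hA0 : (0:ℤ) ≤ A := by linarith
  have h1 : A ^ (D0 * (G * j)) ≤ A ^ (D0 * (m * r)) := by
    calc A ^ (D0 * (G * j)) = ((A ^ G) ^ D0) ^ j := by rw [← pow_mul, ← pow_mul]; congr 1; ring
      _ ≤ (q0 ^ D0) ^ j := by gcongr
      _ ≤ (q ^ r) ^ j := by
        have : 0 ≤ q0 ^ D0 := pow_nonneg (le_trans (by positivity) hq0) _
        gcongr
      _ = (q ^ j) ^ r := by rw [← pow_mul, ← pow_mul, mul_comm]
      _ ≤ (A ^ (D0 * m)) ^ r := by gcongr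
      _ = _ := by rw [← pow_mul, mul_assoc]
  have h2 := (pow_le_pow_iff_right₀ (by linarith : (1:ℤ) < A)).mp h1
  exact Nat.le_of_mul_le_mul_left h2 hD0

lemma peel (U V : MvPolynomial (Fin 3) ℤ) (hV : V ≠ 0) (s : Fin 3) (hU : ∀ e, coeff e U ≠ 0 → e s = 0)
    (hs : ∀ e, coeff e V ≠ 0 → ∀ i, i ≠ s → e i = 0) (ξ w : Fin 3 → ℝ) (p q : ℤ) (hq : 0 < q)
    (hpq : IsCoprime p q) (hξ : ξ s = p / q) (e : ℝ) (h : Idx ξ w e (toR U * toR V)) :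
    ∃ j : ℕ, q ^ j ≤ (len V : ℤ) ∧ Idx ξ w (e - j * w s) (toR U) := by
  obtain ⟨j, hj, hjl⟩ := uni_bound V hV s hs ξ p q hq hpq hξ
  refine ⟨j, hjl, fun i hi => ?_⟩
  have hU' : ∀ e, coeff e (shift ξ (toR U)) ≠ 0 → e s = 0 := by
    intro e he
    obtain ⟨e', he', hle⟩ := shift_le _ _ _ he
    have := hU e' (by rw [coeff_toR] at he'; exact_mod_cast he')
    have := hle s
    omega
  have hV' : ∀ e, coeff e (shift ξ (toR V)) ≠ 0 → ∀ i, i ≠ s → e i = 0 := by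
    intro e he i hi
    obtain ⟨e', he', hle⟩ := shift_le _ _ _ he
    have := hs e' (by rw [coeff_toR] at he'; exact_mod_cast he') i hi
    have := hle i
    omega
  by_contra hne
  have hi0 := hU' i hne
  have hc := coeff_mul_sep _ _ s hU' hV' i hi0 j
  have hz : coeff (i + Finsupp.single s j) (shift ξ (toR U) * shift ξ (toR V)) = 0 := by
    rw [← map_mul]
    apply h
    have : ∑ x, (((i + Finsupp.single s j : Ex) x : ℕ) : ℝ) * w x = (∑ x, (i x : ℝ) * w x) + j * w s := by
      simp only [Finsupp.add_apply, Nat.cast_add, add_mul, Finset.sum_add_distrib]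
      congr 1
      rw [Finset.sum_eq_single s]
      · simp
      · intro b _ hb; rw [Finsupp.single_apply, if_neg (Ne.symm hb)]; simp
      · simp
    rw [this]; linarith
  rw [hz] at hc
  exact mul_ne_zero hne hj hc.symm

lemma choose_le_two_pow' (n a : ℕ) : n.choose a ≤ 2 ^ n := Nat.choose_le_two_pow n a

set_option maxHeartbeats 2000000 in
theorem roth_lemma (ε : ℝ) (hε : 0 < ε) (hε1 : ε ≤ 1) (K : ℕ) (hK : 1 ≤ K) :
    ∃ G g : ℕ, 1 ≤ g ∧ ∀ (B : ℕ) (p q : Fin 3 → ℤ) (D : Fin 3 → ℕ) (P : MvPolynomial (Fin 3) ℤ),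
      1 ≤ B → (∀ s, 0 < q s) → (∀ s, IsCoprime (p s) (q s)) → D 2 = K → g * K ≤ D 1 → g * D 1 ≤ D 0 →
      q 0 ^ D 0 ≤ q 2 ^ D 2 → q 0 ^ D 0 ≤ q 1 ^ (D 1 + 1) → (64 * B : ℤ) ^ G ≤ q 0 →
      P ≠ 0 → Deg D P → len P ≤ B ^ D 0 →
      ¬ Idx (fun s => (p s / q s : ℝ)) (fun s => 1 / (D s : ℝ)) ε (toR P) := by
  obtain ⟨G, hG⟩ := exists_nat_gt (24 * (128 / ε ^ 2) ^ 2)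
  have hev : ∃ g0 : ℕ, ∀ D : ℕ, g0 ≤ D → (D + 1) ^ (2 * K) ≤ 2 ^ D := by
    have h1 := tendsto_pow_const_mul_const_pow_of_abs_lt_one (2 * K) (r := (1/2 : ℝ)) (by rw [abs_of_pos] <;> norm_num)
    have h2 : ∀ᶠ D : ℕ in Filter.atTop, (D:ℝ) ^ (2 * K) * (1/2 : ℝ) ^ D < 1/2 := h1.eventually_lt_const (by norm_num)
    obtain ⟨g0, hg0⟩ := Filter.eventually_atTop.mp h2
    refine ⟨g0, fun D hD => ?_⟩
    have h3 := hg0 (D + 1) (by omega)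
    rw [one_div, inv_pow, ← div_eq_mul_inv, div_lt_iff₀ (by positivity), pow_succ] at h3
    have h4 : ((D + 1 : ℕ) : ℝ) ^ (2 * K) < 2 ^ D := by linarith
    exact_mod_cast h4.le
  obtain ⟨g0, hg0⟩ := hev
  obtain ⟨g1, hg1⟩ := exists_nat_gt (128 / ε ^ 2)
  refine ⟨G, g0 + g1 + 1, by omega, ?_⟩
  set g := g0 + g1 + 1 with hg
  intro B p q D P hB hq hpq hDK h1 h0 hq2 hq1 hq0 hP hDeg hlen hIdx
  have hgε : 128 / ε ^ 2 < g := by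
    rw [hg]; push_cast; have : (0:ℝ) ≤ g0 := by positivity
    linarith
  have hε2 : ε ^ 2 ≤ ε := by nlinarith
  have hgp : (0:ℝ) < g := lt_trans (by positivity) hgε
  have hgε' : 1 / (g:ℝ) ≤ ε ^ 2 / 128 := by
    rw [div_le_div_iff₀ hgp (by norm_num)]
    rw [div_lt_iff₀ (by positivity)] at hgε
    linarith
  have hg1' : 1 ≤ g := by omega
  have hD1K : K ≤ D 1 := le_trans (Nat.le_mul_of_pos_left _ hg1') h1
  have hD01 : D 1 ≤ D 0 := le_trans (Nat.le_mul_of_pos_left _ hg1') h0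
  have hD0g : g0 ≤ D 0 := by
    have : g ≤ g * K := Nat.le_mul_of_pos_right _ hK
    omega
  have hBz : (1:ℤ) ≤ B := by exact_mod_cast hB
  have hD0R : (1:ℝ) ≤ D 0 := by exact_mod_cast (hK.trans (hD1K.trans hD01))
  have hD1R : (1:ℝ) ≤ D 1 := by exact_mod_cast (hK.trans hD1K)
  have hKR : (1:ℝ) ≤ K := by exact_mod_cast hK
  have hg1R : (g:ℝ) * K ≤ D 1 := by exact_mod_cast h1
  have hg0R : (g:ℝ) * D 1 ≤ D 0 := by exact_mod_cast h0
  -- step A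
  obtain ⟨k, U, V, hk1, hkK, hU0, hV0, hUD, hUs, hVs, hUl, hVl, hidx⟩ := step P hP D hDeg 2 ![1, D 0 + 1, 0] rfl (by
    rintro e ⟨he2, heD⟩ e' ⟨he2', heD'⟩ heq
    simp only [lam, Fin.sum_univ_three] at heq
    simp at heq
    have a1 := heD 0
    have a2 := heD' 0
    have h10 : e 1 = e' 1 := by
      have b1 : (e 0 + (D 0 + 1) * e 1) / (D 0 + 1) = e 1 := by
        rw [Nat.add_mul_div_left _ _ (by omega), Nat.div_eq_of_lt (by omega)]; omega
      have b2 : (e' 0 + (D 0 + 1) * e' 1) / (D 0 + 1) = e' 1 := by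
        rw [Nat.add_mul_div_left _ _ (by omega), Nat.div_eq_of_lt (by omega)]; omega
      rw [← b1, ← b2, heq]
    ext i
    fin_cases i
    · simp; rw [h10] at heq; omega
    · exact h10
    · exact he2.trans he2'.symm) (4 ^ D 0) (by
    intro e he a b ha hb
    have hlam : lam ![1, D 0 + 1, 0] e ≤ (D 0 + 1) ^ 2 := by
      simp only [lam, Fin.sum_univ_three]
      simp
      have a1 := he 0
      have a2 := he 1
      nlinarith
    have c1 : (lam ![1, D 0 + 1, 0] e).choose a ≤ 2 ^ D 0 := by
      calc _ ≤ (lam ![1, D 0 + 1, 0] e) ^ a := Nat.choose_le_pow _ _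
        _ ≤ ((D 0 + 1) ^ 2) ^ a := Nat.pow_le_pow_left hlam _
        _ ≤ ((D 0 + 1) ^ 2) ^ K := Nat.pow_le_pow_right (by positivity) (by omega)
        _ = (D 0 + 1) ^ (2 * K) := by rw [pow_mul]
        _ ≤ _ := hg0 _ hD0g
    have c2 : (e 2).choose b ≤ 2 ^ D 0 := (Nat.choose_le_two_pow _ _).trans
      (Nat.pow_le_pow_right (by norm_num) (by have := he 2; omega))
    calc _ ≤ 2 ^ D 0 * 2 ^ D 0 := Nat.mul_le_mul c1 c2
      _ = 4 ^ D 0 := by rw [← mul_pow]; norm_num)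
  have hlen1 : (k * (4 ^ D 0 * len P)) ^ k ≤ (8 * B) ^ (D 0 * k) := by
    rw [pow_mul]
    refine Nat.pow_le_pow_left ?_ _
    have hk2 : k ≤ 2 ^ D 0 := by
      have : D 0 < 2 ^ D 0 := Nat.lt_two_pow_self
      omega
    calc k * (4 ^ D 0 * len P) ≤ 2 ^ D 0 * (4 ^ D 0 * B ^ D 0) := by gcongr
      _ = (8 * B) ^ D 0 := by rw [← mul_pow, ← mul_pow]; congr 1; ring
  set ξ : Fin 3 → ℝ := fun s => (p s / q s : ℝ) with hξ
  set w : Fin 3 → ℝ := fun s => 1 / (D s : ℝ) with hw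
  have hw0 : ∀ i, 0 ≤ w i := fun i => by rw [hw]; positivity
  have hkR : (1:ℝ) ≤ k := by exact_mod_cast hk1
  have hkKR : (k:ℝ) ≤ K + 1 := by rw [hDK] at hkK; exact_mod_cast hkK
  have hA := hidx ξ w (1 / D 1) ε hw0 (by positivity) (by
    intro i hi
    fin_cases i
    · simp only [hw, Fin.zero_eta]; gcongr
    · simp [hw]
    · simp at hi) hIdx
  have hAe : k * (ε / 2) ^ 2 / 8 ≤ ∑ b : Fin k, max 0 (ε - (k - 1) * (1 / (D 1:ℝ)) - (b : ℕ) * w 2) := by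
    refine (sum_max (ε / 2) (by positivity) (by linarith) K k hK hk1 (by omega)).trans ?_
    refine Finset.sum_le_sum fun b _ => ?_
    refine max_le_max le_rfl ?_
    have hwK : w 2 = 1 / K := by simp [hw, hDK]
    rw [hwK]
    have : ((k:ℝ) - 1) * (1 / D 1) ≤ ε / 2 := by
      have h3 : ((k:ℝ) - 1) * (1 / D 1) ≤ 1 / g := by
        rw [mul_one_div, div_le_div_iff₀ (by linarith) hgp]; nlinarith
      linarith
    linarith
  replace hA := hA.mono hAe
  obtain ⟨j, hj, hIU⟩ := peel U V hV0 2 hUs hVs ξ w (p 2) (q 2) (hq 2) (hpq 2) rfl _ hA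
  have hGj : G * j ≤ k * K := by
    refine powlem (64 * B) (q 0) (q 2) G (D 0) j k K (by linarith) hq0 (by omega) (hDK ▸ hq2) (hq 2) (hj.trans ?_)
    have : len V ≤ (64 * B) ^ (D 0 * k) := (hVl.trans hlen1).trans (Nat.pow_le_pow_left (by omega) _)
    exact_mod_cast this
  have hGR : (0:ℝ) < G := lt_trans (by positivity) hG
  have hGε : 1 / (G:ℝ) ≤ (ε ^ 2 / 128) ^ 2 / 24 := by
    rw [div_le_iff₀ hGR]
    have e2 : (ε ^ 2 / 128) ^ 2 / 24 * (24 * (128 / ε ^ 2) ^ 2) = 1 := by field_simp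
    rw [← e2]; gcongr
  have hIU2 : Idx ξ w (k * (ε ^ 2 / 64)) (toR U) := by
    refine hIU.mono ?_
    have hGjR : (G:ℝ) * j ≤ k * K := by exact_mod_cast hGj
    have hwK : w 2 = 1 / K := by simp [hw, hDK]
    have : j * w 2 ≤ k * (1 / G) := by
      rw [hwK, mul_one_div, mul_one_div, div_le_div_iff₀ (by linarith) hGR]; linarith
    have h5 : (ε ^ 2 / 128) ^ 2 / 24 ≤ ε ^ 2 / 64 := by
      have : ε ^ 2 ≤ 1 := by nlinarith
      nlinarith [sq_nonneg ε]
    have h6 : k * (1 / (G:ℝ)) ≤ k * (ε ^ 2 / 64) := by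
      have := hGε.trans h5
      gcongr
    have h7 : k * (ε / 2) ^ 2 / 8 = 2 * (k * (ε ^ 2 / 64)) := by ring
    linarith
  -- step B
  have hUD2 : Deg ![k * D 0, k * D 1, 0] U := by
    intro e he i
    fin_cases i
    · exact hUD e he 0
    · exact hUD e he 1
    · exact (hUs e he).le
  have hkD : k * D 1 ≤ k * D 0 := Nat.mul_le_mul_left _ hD01
  obtain ⟨k2, U2, V2, hk21, hk2K, hU20, hV20, hU2D, hU2s, hV2s, hU2l, hV2l, hidx2⟩ :=
    step U hU0 ![k * D 0, k * D 1, 0] hUD2 1 ![1, 0, 0] rfl (by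
    rintro e ⟨he1, heD⟩ e' ⟨he1', heD'⟩ heq
    simp only [lam, Fin.sum_univ_three] at heq
    simp at heq
    ext i
    fin_cases i
    · exact heq
    · exact he1.trans he1'.symm
    · have a1 := heD 2
      have a2 := heD' 2
      simp at a1 a2
      simp [a1, a2]) (4 ^ (k * D 0)) (by
    intro e he a b ha hb
    have c1 : (lam ![1, 0, 0] e).choose a ≤ 2 ^ (k * D 0) := by
      refine (Nat.choose_le_two_pow _ _).trans (Nat.pow_le_pow_right (by norm_num) ?_)
      simp only [lam, Fin.sum_univ_three]
      simpa using he 0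
    have c2 : (e 1).choose b ≤ 2 ^ (k * D 0) := (Nat.choose_le_two_pow _ _).trans
      (Nat.pow_le_pow_right (by norm_num) ((he 1).trans hkD))
    calc _ ≤ 2 ^ (k * D 0) * 2 ^ (k * D 0) := Nat.mul_le_mul c1 c2
      _ = 4 ^ (k * D 0) := by rw [← mul_pow]; norm_num)
  have hk2K' : k2 ≤ k * D 1 + 1 := hk2K
  have hlen2 : (k2 * (4 ^ (k * D 0) * len U)) ^ k2 ≤ (64 * B) ^ (D 0 * (k * k2)) := by
    rw [← mul_assoc (D 0) k k2, pow_mul _ (D 0 * k) k2]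
    refine Nat.pow_le_pow_left ?_ _
    have hk2 : k2 ≤ 2 ^ (k * D 0) := by
      have : k * D 0 < 2 ^ (k * D 0) := Nat.lt_two_pow_self
      omega
    calc k2 * (4 ^ (k * D 0) * len U) ≤ 2 ^ (k * D 0) * (4 ^ (k * D 0) * (8 * B) ^ (D 0 * k)) := by
          gcongr; exact hUl.trans hlen1
      _ = (64 * B) ^ (D 0 * k) := by
          rw [mul_comm k, ← mul_pow, ← mul_pow]; congr 1; ring
  have hk2R : (1:ℝ) ≤ k2 := by exact_mod_cast hk21
  have hk2KR : (k2:ℝ) ≤ k * D 1 + 1 := by exact_mod_cast hk2K'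
  have hB2 := hidx2 ξ w (1 / D 0) _ hw0 (by positivity) (by
    intro i hi
    fin_cases i
    · simp [hw]
    · simp at hi
    · simp at hi) hIU2
  have hBe : k * (k2 * (ε ^ 2 / 128) ^ 2 / 8) ≤
      ∑ b : Fin k2, max 0 (k * (ε ^ 2 / 64) - (k2 - 1) * (1 / (D 0:ℝ)) - (b : ℕ) * w 1) := by
    refine (mul_le_mul_of_nonneg_left (sum_max (ε ^ 2 / 128) (by positivity) (by nlinarith) (k * D 1) k2
      (Nat.mul_pos hk1 (by omega)) hk21 hk2K') (by positivity)).trans ?_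
    rw [Finset.mul_sum]
    refine Finset.sum_le_sum fun b _ => ?_
    rw [mul_max_of_nonneg _ _ (by positivity), mul_zero]
    refine max_le_max le_rfl ?_
    have h3 : ((k2:ℝ) - 1) * (1 / D 0) ≤ k * (1 / g) := by
      rw [mul_one_div, mul_one_div, div_le_div_iff₀ (by linarith) hgp]; nlinarith
    have h4 : k * (1 / (g:ℝ)) ≤ k * (ε ^ 2 / 128) := by gcongr
    have h5 : (k:ℝ) * ((b : ℕ) * (1 / ((k * D 1 : ℕ) : ℝ))) = (b:ℕ) * w 1 := by
      simp only [hw]; push_cast; field_simp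
    rw [mul_sub, h5]
    linarith
  replace hB2 := hB2.mono hBe
  obtain ⟨j2, hj2, hIU'⟩ := peel U2 V2 hV20 1 hU2s hV2s ξ w (p 1) (q 1) (hq 1) (hpq 1) rfl _ hB2
  have hGj2 : G * j2 ≤ (k * k2) * (D 1 + 1) := by
    refine powlem (64 * B) (q 0) (q 1) G (D 0) j2 _ _ (by linarith) hq0 (by omega) hq1 (hq 1) (hj2.trans ?_)
    exact_mod_cast hV2l.trans hlen2
  have hU2s' : ∀ e, coeff e U2 ≠ 0 → ∀ i, i ≠ 0 → e i = 0 := by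
    intro e he i hi
    fin_cases i
    · simp at hi
    · exact hU2s e he
    · have := hU2D e he 2
      simpa using this
  obtain ⟨i, hi, hil⟩ := uni_bound U2 hU20 0 hU2s' ξ (p 0) (q 0) (hq 0) (hpq 0) rfl
  have hGi : G * i ≤ (k * k2) * D 0 := by
    refine powlem (64 * B) (q 0) (q 0) G (D 0) i _ _ (by linarith) hq0 (by omega) le_rfl (hq 0) (hil.trans ?_)
    exact_mod_cast hU2l.trans hlen2
  apply hi
  apply hIU'
  rw [Fin.sum_univ_three]
  simp only [Finsupp.single_apply]
  simp
  have hGiR : (G:ℝ) * i ≤ (k * k2) * D 0 := by exact_mod_cast hGi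
  have hGj2R : (G:ℝ) * j2 ≤ (k * k2) * (D 1 + 1) := by exact_mod_cast hGj2
  have e1 : i * w 0 ≤ (k * k2) * (1 / G) := by
    simp only [hw]
    rw [mul_one_div, mul_one_div, div_le_div_iff₀ (by linarith) hGR]; linarith
  have hkk : (0:ℝ) < k * k2 := by positivity
  have e2 : j2 * w 1 ≤ 2 * (k * k2) * (1 / G) := by
    simp only [hw]
    rw [mul_one_div, mul_one_div, div_le_div_iff₀ (by linarith) hGR]
    have := mul_le_mul_of_nonneg_left hD1R hkk.le
    linarith
  have hG2 : 3 * (1 / (G:ℝ)) < (ε ^ 2 / 128) ^ 2 / 8 := by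
    have e2 : (ε ^ 2 / 128) ^ 2 / 24 * (24 * (128 / ε ^ 2) ^ 2) = 1 := by field_simp
    have : 1 / (G:ℝ) < (ε ^ 2 / 128) ^ 2 / 24 := by
      rw [div_lt_iff₀ hGR]
      rw [← e2]; gcongr
    linarith
  have := mul_lt_mul_of_pos_left hG2 hkk
  have h8 : (k:ℝ) * (k2 * (ε ^ 2 / 128) ^ 2 / 8) = k * k2 * ((ε ^ 2 / 128) ^ 2 / 8) := by ring
  have h9 : w 0 = ((D 0 : ℝ))⁻¹ := by simp [hw]
  have h10 : w 1 = ((D 1 : ℝ))⁻¹ := by simp [hw]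
  linarith

end RothAux

namespace RothAux
open MvPolynomial

lemma tele (g h : ℝ → ℝ) (D : ℝ) (hD : 0 < D) (hst : ∀ z, g z ≤ D * (h (z + 1 / D) - h z)) (hh : ∀ z, 0 ≤ h z)
    (y : ℝ) (N : ℕ) : ∑ i ∈ Finset.range N, g (y - i * (1 / D)) ≤ D * h (y + 1 / D) := by
  have : ∑ i ∈ Finset.range N, g (y - i * (1 / D)) ≤ D * (h (y + 1 / D) - h (y + 1 / D - N * (1 / D))) := by
    induction N with
    | zero => simp
    | succ N ih =>
      rw [Finset.sum_range_succ]
      have := hst (y - N * (1 / D))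
      have e1 : y - N * (1 / D) + 1 / D = y + 1 / D - N * (1 / D) := by ring
      have e2 : y + 1 / D - ((N + 1 : ℕ) : ℝ) * (1 / D) = y - N * (1 / D) := by push_cast; ring
      rw [e1] at this
      rw [e2]
      linarith
  refine this.trans ?_
  have := hh (y + 1 / D - N * (1 / D))
  nlinarith

lemma count_bound (D : Fin 3 → ℝ) (hD : ∀ s, 0 < D s) (t : ℝ) (N0 N1 N2 : ℕ) :
    ∑ i ∈ Finset.range N0, ∑ j ∈ Finset.range N1, ∑ k ∈ Finset.range N2,
      (if 0 < t - i * (1 / D 0) - j * (1 / D 1) - k * (1 / D 2) then (1:ℝ) else 0) ≤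
      D 0 * D 1 * D 2 * ((max 0 (t + 1 / D 0 + 1 / D 1 + 1 / D 2)) ^ 3 / 6) := by
  have h0 := hD 0
  have h1 := hD 1
  have h2 := hD 2
  have s1 : ∀ y, ∑ k ∈ Finset.range N2, (if 0 < y - k * (1 / D 2) then (1:ℝ) else 0) ≤ D 2 * max 0 (y + 1 / D 2) := by
    intro y
    refine tele (fun z => if 0 < z then 1 else 0) (fun z => max 0 z) (D 2) h2 ?_ (fun z => le_max_left _ _) y N2
    intro z
    have hp : 0 < 1 / D 2 := by positivity
    have hp2 : D 2 * (1 / D 2) = 1 := by field_simp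
    split_ifs with hz
    · rw [max_eq_right hz.le, max_eq_right (by linarith)]
      nlinarith
    · refine mul_nonneg h2.le ?_
      have := max_le_max (le_refl (0:ℝ)) (by linarith : z ≤ z + 1 / D 2)
      linarith
  have s2 : ∀ y, ∑ k ∈ Finset.range N1, max 0 (y - k * (1 / D 1)) ≤ D 1 * ((max 0 (y + 1 / D 1)) ^ 2 / 2) := by
    intro y
    refine tele (fun z => max 0 z) (fun z => (max 0 z) ^ 2 / 2) (D 1) h1 ?_ (fun z => by positivity) y N1
    intro z
    have hp : 0 < 1 / D 1 := by positivity
    have hp2 : D 1 * (1 / D 1) = 1 := by field_simp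
    set u := 1 / D 1
    rcases le_or_gt z 0 with hz | hz
    · rw [max_eq_left hz]
      have : 0 ≤ max 0 (z + u) ^ 2 := by positivity
      nlinarith
    · rw [max_eq_right hz.le, max_eq_right (by linarith)]
      have : D 1 * ((z + u) ^ 2 / 2 - z ^ 2 / 2) = (D 1 * u) * (z + u / 2) := by ring
      rw [this, hp2]; linarith
  have s3 : ∀ y, ∑ k ∈ Finset.range N0, (max 0 (y - k * (1 / D 0))) ^ 2 / 2 ≤ D 0 * ((max 0 (y + 1 / D 0)) ^ 3 / 6) := by
    intro y
    refine tele (fun z => (max 0 z) ^ 2 / 2) (fun z => (max 0 z) ^ 3 / 6) (D 0) h0 ?_ (fun z => by positivity) y N0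
    intro z
    have hp : 0 < 1 / D 0 := by positivity
    have hp2 : D 0 * (1 / D 0) = 1 := by field_simp
    set u := 1 / D 0
    rcases le_or_gt z 0 with hz | hz
    · rw [max_eq_left hz]
      have : 0 ≤ max 0 (z + u) ^ 3 := by positivity
      nlinarith
    · rw [max_eq_right hz.le, max_eq_right (by linarith)]
      have : D 0 * ((z + u) ^ 3 / 6 - z ^ 3 / 6) = (D 0 * u) * (z ^ 2 / 2 + z * u / 2 + u ^ 2 / 6) := by ring
      rw [this, hp2]
      have : 0 < z * u := by positivity
      nlinarith [sq_nonneg u]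
  calc _ ≤ ∑ i ∈ Finset.range N0, ∑ j ∈ Finset.range N1, D 2 * max 0 (t - i * (1 / D 0) + 1 / D 2 - j * (1 / D 1)) := by
        refine Finset.sum_le_sum fun i _ => Finset.sum_le_sum fun j _ => (s1 _).trans (le_of_eq ?_)
        congr 2; ring
    _ ≤ ∑ i ∈ Finset.range N0, D 2 * (D 1 * ((max 0 (t + 1 / D 1 + 1 / D 2 - i * (1 / D 0))) ^ 2 / 2)) := by
        refine Finset.sum_le_sum fun i _ => ?_
        rw [← Finset.mul_sum]
        refine (mul_le_mul_of_nonneg_left (s2 _) h2.le).trans (le_of_eq ?_)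
        rw [show t - i * (1 / D 0) + 1 / D 2 + 1 / D 1 = t + 1 / D 1 + 1 / D 2 - i * (1 / D 0) by ring]
    _ ≤ D 2 * (D 1 * (D 0 * ((max 0 (t + 1 / D 1 + 1 / D 2 + 1 / D 0)) ^ 3 / 6))) := by
        rw [← Finset.mul_sum, ← Finset.mul_sum]
        gcongr
        exact s3 _
    _ = _ := by
      rw [show t + 1 / D 1 + 1 / D 2 + 1 / D 0 = t + 1 / D 0 + 1 / D 1 + 1 / D 2 by ring]; ring

lemma pow_red (d : ℕ) (c : ℝ) (r : Fin (d + 1) → ℤ) (hc : c ^ (d + 1) = ∑ l, (r l : ℝ) * c ^ (l : ℕ))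
    (R : ℤ) (hR : ∀ l, |r l| ≤ R) (j : ℕ) :
    ∃ a : Fin (d + 1) → ℤ, (∀ l, |a l| ≤ (1 + R) ^ j) ∧ c ^ j = ∑ l, (a l : ℝ) * c ^ (l : ℕ) := by
  have hR0 : 0 ≤ R := (abs_nonneg _).trans (hR 0)
  induction j with
  | zero =>
    refine ⟨Fin.cons 1 0, ?_, ?_⟩
    · intro l
      refine Fin.cases ?_ (fun l => ?_) l <;> simp
    · rw [Fin.sum_univ_succ]; simp
  | succ j ih =>
    obtain ⟨a, ha, hca⟩ := ih
    let f : Fin (d + 1) → ℤ := Fin.cons 0 (fun l => a l.castSucc)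
    refine ⟨fun l => f l + a (Fin.last d) * r l, ?_, ?_⟩
    · intro l
      have h1 : |f l| ≤ (1 + R) ^ j := by
        refine Fin.cases ?_ (fun l => ?_) l
        · simp [f]; positivity
        · simpa [f] using ha _
      calc _ ≤ |f l| + |a (Fin.last d)| * |r l| := by rw [← abs_mul]; exact abs_add_le _ _
        _ ≤ (1 + R) ^ j + (1 + R) ^ j * R := by
          have := ha (Fin.last d)
          have := hR l
          gcongr
        _ = _ := by ring
    · rw [pow_succ, hca, Fin.sum_univ_castSucc, add_mul]
      have e1 : (a (Fin.last d) : ℝ) * c ^ ((Fin.last d : Fin (d + 1)) : ℕ) * c = a (Fin.last d) * ∑ l, (r l : ℝ) * c ^ (l : ℕ) := by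
        rw [← hc, Fin.val_last, pow_succ]; ring
      have e2 : ∑ l : Fin (d + 1), (f l : ℝ) * c ^ (l : ℕ) = (∑ l : Fin d, (a l.castSucc : ℝ) * c ^ (l.castSucc : ℕ)) * c := by
        rw [Fin.sum_univ_succ, Finset.sum_mul]
        simp only [f, Fin.cons_zero, Fin.cons_succ, Int.cast_zero, zero_mul, zero_add]
        refine Finset.sum_congr rfl fun l _ => ?_
        simp [pow_succ, mul_assoc]
      rw [e1, ← e2, Finset.mul_sum, ← Finset.sum_add_distrib]
      refine Finset.sum_congr rfl fun l _ => ?_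
      push_cast; ring

end RothAux

namespace RothAux
open MvPolynomial

/-- box of exponents -/
abbrev Box (D : Fin 3 → ℕ) := Fin (D 0 + 1) × Fin (D 1 + 1) × Fin (D 2 + 1)

/-- exponent of a box element -/
noncomputable def ex {D : Fin 3 → ℕ} (b : Box D) : Ex :=
  Finsupp.equivFunOnFinite.symm ![(b.1 : ℕ), (b.2.1 : ℕ), (b.2.2 : ℕ)]

lemma ex0 {D : Fin 3 → ℕ} (b : Box D) : ex b 0 = b.1 := rfl
lemma ex1 {D : Fin 3 → ℕ} (b : Box D) : ex b 1 = b.2.1 := rfl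
lemma ex2 {D : Fin 3 → ℕ} (b : Box D) : ex b 2 = b.2.2 := rfl

lemma ex_le {D : Fin 3 → ℕ} (b : Box D) (s : Fin 3) : ex b s ≤ D s := by
  fin_cases s
  · exact Nat.le_of_lt_succ b.1.2
  · exact Nat.le_of_lt_succ b.2.1.2
  · exact Nat.le_of_lt_succ b.2.2.2

lemma ex_inj {D : Fin 3 → ℕ} : Function.Injective (ex (D := D)) := by
  intro b b' h
  have h0 := DFunLike.congr_fun h 0
  have h1 := DFunLike.congr_fun h 1
  have h2 := DFunLike.congr_fun h 2
  rw [ex0, ex0] at h0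
  rw [ex1, ex1] at h1
  rw [ex2, ex2] at h2
  exact Prod.ext (Fin.ext h0) (Prod.ext (Fin.ext h1) (Fin.ext h2))

lemma ex_surj {D : Fin 3 → ℕ} (e : Ex) (he : ∀ s, e s ≤ D s) : ∃ b : Box D, ex b = e := by
  refine ⟨(⟨e 0, Nat.lt_succ_of_le (he 0)⟩, ⟨e 1, Nat.lt_succ_of_le (he 1)⟩, ⟨e 2, Nat.lt_succ_of_le (he 2)⟩), ?_⟩
  ext s
  fin_cases s <;> rfl

lemma card_Box (D : Fin 3 → ℕ) : Fintype.card (Box D) = (D 0 + 1) * ((D 1 + 1) * (D 2 + 1)) := by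
  simp [Fintype.card_prod]

attribute [local instance] Matrix.seminormedAddCommGroup

lemma card_low (D : Fin 3 → ℕ) (K : ℕ) (hK : 1 ≤ K) (hKD : ∀ s, K ≤ D s) (t : ℝ) (ht : 0 < t) :
    (Fintype.card {b : Box D // ∑ s, (ex b s : ℝ) * (1 / (D s : ℝ)) < t} : ℝ) ≤
      ((t + 3 / K) ^ 3 / 6) * Fintype.card (Box D) := by
  classical
  have hKR : (1:ℝ) ≤ K := by exact_mod_cast hK
  have hDR : ∀ s, (K:ℝ) ≤ D s := fun s => by exact_mod_cast hKD s
  have hcb := count_bound (fun s => (D s : ℝ)) (fun s => by have := hDR s; linarith) t (D 0 + 1) (D 1 + 1) (D 2 + 1)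
  have e1 : (Fintype.card {b : Box D // ∑ s, (ex b s : ℝ) * (1 / (D s : ℝ)) < t} : ℝ) =
      ∑ i ∈ Finset.range (D 0 + 1), ∑ j ∈ Finset.range (D 1 + 1), ∑ k ∈ Finset.range (D 2 + 1),
      (if 0 < t - i * (1 / (D 0 : ℝ)) - j * (1 / (D 1 : ℝ)) - k * (1 / (D 2 : ℝ)) then (1:ℝ) else 0) := by
    rw [Fintype.card_subtype, Finset.card_filter]
    push_cast
    rw [Fintype.sum_prod_type, ← Fin.sum_univ_eq_sum_range (fun i : ℕ => ∑ j ∈ Finset.range (D 1 + 1), ∑ k ∈ Finset.range (D 2 + 1),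
      (if 0 < t - i * (1 / (D 0 : ℝ)) - j * (1 / (D 1 : ℝ)) - k * (1 / (D 2 : ℝ)) then (1:ℝ) else 0))]
    refine Finset.sum_congr rfl fun i _ => ?_
    rw [Fintype.sum_prod_type, ← Fin.sum_univ_eq_sum_range (fun j : ℕ => ∑ k ∈ Finset.range (D 2 + 1),
      (if 0 < t - (i : ℕ) * (1 / (D 0 : ℝ)) - j * (1 / (D 1 : ℝ)) - k * (1 / (D 2 : ℝ)) then (1:ℝ) else 0))]
    refine Finset.sum_congr rfl fun j _ => ?_
    rw [← Fin.sum_univ_eq_sum_range (fun k : ℕ =>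
      (if 0 < t - (i : ℕ) * (1 / (D 0 : ℝ)) - (j : ℕ) * (1 / (D 1 : ℝ)) - k * (1 / (D 2 : ℝ)) then (1:ℝ) else 0))]
    refine Finset.sum_congr rfl fun k _ => ?_
    rw [Fin.sum_univ_three, ex0, ex1, ex2]
    refine if_congr ?_ rfl rfl
    constructor <;> intro h <;> linarith
  rw [e1]
  refine hcb.trans ?_
  have hi : ∀ s, 1 / (D s : ℝ) ≤ 1 / K := fun s => one_div_le_one_div_of_le (by linarith) (hDR s)
  have hm : max 0 (t + 1 / (D 0 : ℝ) + 1 / (D 1 : ℝ) + 1 / (D 2 : ℝ)) ≤ t + 3 / K := by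
    refine max_le (by positivity) ?_
    have := hi 0
    have := hi 1
    have := hi 2
    have : (3:ℝ) / K = 1 / K + 1 / K + 1 / K := by ring
    linarith
  rw [card_Box, mul_comm]
  push_cast
  have h0 := (hKR.trans (hDR 0))
  have h1 := (hKR.trans (hDR 1))
  have h2 := (hKR.trans (hDR 2))
  refine mul_le_mul (by gcongr) ?_ (by positivity) (by positivity)
  rw [mul_assoc]
  gcongr <;> linarith

lemma len_monomial_le (e : Ex) (a : ℤ) : len (monomial e a) ≤ a.natAbs := by
  have := len_monomial_mul e a 1
  rw [mul_one] at this
  refine this.trans ?_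
  calc _ ≤ a.natAbs * 1 := Nat.mul_le_mul_left _ len_one
    _ = _ := mul_one _

set_option maxHeartbeats 1000000 in
lemma aux_poly (d : ℕ) (c : ℝ) (r : Fin (d + 1) → ℤ) (hc : c ^ (d + 1) = ∑ l, (r l : ℝ) * c ^ (l : ℕ))
    (K : ℕ) (hK : 1 ≤ K) (t : ℝ) (ht : 0 < t) (hnum : (d + 1 : ℝ) * ((t + 3 / K) ^ 3 / 6) ≤ 95 / 100) :
    ∃ B : ℕ, 1 ≤ B ∧ ∀ D : Fin 3 → ℕ, (∀ s, K ≤ D s) → (∀ s, D s ≤ D 0) →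
      ∃ P : MvPolynomial (Fin 3) ℤ, P ≠ 0 ∧ Deg D P ∧ len P ≤ B ^ D 0 ∧
        Idx (fun _ => c) (fun s => 1 / (D s : ℝ)) t (toR P) := by
  classical
  let R : ℕ := ∑ l, (r l).natAbs
  have hR : ∀ l, |r l| ≤ (R : ℤ) := by
    intro l
    rw [Int.abs_eq_natAbs]
    exact_mod_cast Finset.single_le_sum (f := fun l => (r l).natAbs) (fun _ _ => Nat.zero_le _) (Finset.mem_univ l)
  choose a ha hca using pow_red d c r hc R hR
  refine ⟨8 * (64 * (1 + R) ^ 3) ^ 19, by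
    have : 0 < 8 * (64 * (1 + R) ^ 3) ^ 19 := by positivity
    omega, fun D hKD hD0 => ?_⟩
  let Lo := {b : Box D // ∑ s, (ex b s : ℝ) * (1 / (D s : ℝ)) < t}
  let A : Matrix (Lo × Fin (d + 1)) (Box D) ℤ := fun il b =>
    (∏ s, ((ex b s).choose (ex il.1.1 s) : ℤ)) * a (∑ s, (ex b s - ex il.1.1 s)) il.2
  have hlow := card_low D K hK hKD t ht
  have hm : (Fintype.card (Lo × Fin (d + 1)) : ℝ) ≤ 95 / 100 * Fintype.card (Box D) := by
    rw [Fintype.card_prod, Fintype.card_fin]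
    push_cast
    have hn0 : (0:ℝ) ≤ Fintype.card (Box D) := by positivity
    calc _ ≤ ((t + 3 / K) ^ 3 / 6) * Fintype.card (Box D) * (d + 1) := by gcongr
      _ = ((d + 1 : ℝ) * ((t + 3 / K) ^ 3 / 6)) * Fintype.card (Box D) := by ring
      _ ≤ _ := by gcongr
  have hnpos : (0:ℝ) < Fintype.card (Box D) := by
    rw [card_Box]; positivity
  have hn : Fintype.card (Lo × Fin (d + 1)) < Fintype.card (Box D) := by
    have : (Fintype.card (Lo × Fin (d + 1)) : ℝ) < Fintype.card (Box D) := by linarith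
    exact_mod_cast this
  have hm0 : 0 < Fintype.card (Lo × Fin (d + 1)) := by
    rw [Fintype.card_pos_iff]
    refine ⟨(⟨(0, 0, 0), ?_⟩, 0)⟩
    rw [Fin.sum_univ_three, ex0, ex1, ex2]
    simpa using ht
  obtain ⟨x, hx0, hAx, hxn⟩ := Int.Matrix.exists_ne_zero_int_vec_norm_le A hn hm0
  have hcard : Fintype.card (Box D) ≤ 8 ^ D 0 := by
    rw [card_Box]
    have h2 : ∀ s, D s + 1 ≤ 2 ^ D 0 := fun s => by
      have : D 0 < 2 ^ D 0 := Nat.lt_two_pow_self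
      have := hD0 s
      omega
    calc _ ≤ 2 ^ D 0 * (2 ^ D 0 * 2 ^ D 0) := Nat.mul_le_mul (h2 0) (Nat.mul_le_mul (h2 1) (h2 2))
      _ = 8 ^ D 0 := by rw [← mul_pow, ← mul_pow]; norm_num
  have hentry : ∀ il b, |A il b| ≤ (8 * (1 + R) ^ 3) ^ D 0 := by
    intro il b
    have h1 : |∏ s, ((ex b s).choose (ex il.1.1 s) : ℤ)| ≤ 8 ^ D 0 := by
      rw [Finset.abs_prod]
      calc _ ≤ ∏ s : Fin 3, (2:ℤ) ^ D 0 := by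
            refine Finset.prod_le_prod (fun _ _ => abs_nonneg _) fun s _ => ?_
            rw [abs_of_nonneg (by positivity)]
            have : (ex b s).choose (ex il.1.1 s) ≤ 2 ^ D 0 := (Nat.choose_le_two_pow _ _).trans
              (Nat.pow_le_pow_right (by norm_num) ((ex_le b s).trans (hD0 s)))
            exact_mod_cast this
        _ = _ := by
          rw [Finset.prod_const, Finset.card_univ, Fintype.card_fin, ← pow_mul, mul_comm, pow_mul]; norm_num
    have h2 : |a (∑ s, (ex b s - ex il.1.1 s)) il.2| ≤ ((1 + R) ^ 3) ^ D 0 := by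
      refine (ha _ _).trans ?_
      rw [← pow_mul]
      refine pow_le_pow_right₀ (by linarith [Int.natCast_nonneg R]) ?_
      calc _ ≤ ∑ s : Fin 3, D 0 := Finset.sum_le_sum fun s _ => (Nat.sub_le _ _).trans ((ex_le b s).trans (hD0 s))
        _ = 3 * D 0 := by simp
    rw [abs_mul, mul_pow]
    gcongr
  have hRR : (1:ℝ) ≤ 1 + R := by linarith [Nat.cast_nonneg (α := ℝ) R]
  have hE : (1:ℝ) ≤ (8 * (1 + R) ^ 3) ^ D 0 := one_le_pow₀ (by nlinarith [one_le_pow₀ (n := 3) hRR])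
  have hE2 : (1:ℝ) ≤ (64 * (1 + R) ^ 3) ^ D 0 := one_le_pow₀ (by nlinarith [one_le_pow₀ (n := 3) hRR])
  have hnorm : ‖A‖ ≤ (8 * (1 + R) ^ 3) ^ D 0 := by
    rw [Matrix.norm_le_iff (by positivity)]
    intro il b
    rw [Int.norm_eq_abs]
    have := hentry il b
    have : ((|A il b| : ℤ) : ℝ) ≤ (((8 * (1 + R) ^ 3) ^ D 0 : ℤ) : ℝ) := by exact_mod_cast this
    push_cast at this
    exact this
  have hbase : (Fintype.card (Box D) : ℝ) * max 1 ‖A‖ ≤ (64 * (1 + R) ^ 3) ^ D 0 := by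
    have hcardR : (Fintype.card (Box D) : ℝ) ≤ 8 ^ D 0 := by exact_mod_cast hcard
    calc _ ≤ (8:ℝ) ^ D 0 * (8 * (1 + R) ^ 3) ^ D 0 := by
          gcongr
          exact max_le hE hnorm
      _ = _ := by rw [← mul_pow]; congr 1; ring
  have hexp : (Fintype.card (Lo × Fin (d + 1)) : ℝ) / (Fintype.card (Box D) - Fintype.card (Lo × Fin (d + 1))) ≤ 19 := by
    rw [div_le_iff₀ (by linarith)]
    linarith
  have hxn2 : ‖x‖ ≤ ((64 * (1 + R) ^ 3) ^ D 0) ^ 19 := by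
    refine hxn.trans ?_
    calc _ ≤ ((64 * (1 + R : ℝ) ^ 3) ^ D 0) ^ ((Fintype.card (Lo × Fin (d + 1)) : ℝ) / (Fintype.card (Box D) - Fintype.card (Lo × Fin (d + 1)))) := by
          refine Real.rpow_le_rpow (by positivity) hbase ?_
          exact div_nonneg (by positivity) (by linarith)
      _ ≤ ((64 * (1 + R : ℝ) ^ 3) ^ D 0) ^ (19 : ℝ) := Real.rpow_le_rpow_of_exponent_le hE2 hexp
      _ = _ := by
        have : (19:ℝ) = ((19:ℕ) : ℝ) := by norm_num
        rw [this, Real.rpow_natCast]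
  have hxb : ∀ b, (x b).natAbs ≤ ((64 * (1 + R) ^ 3) ^ D 0) ^ 19 := by
    intro b
    have h1 := (norm_le_pi_norm x b).trans hxn2
    rw [Int.norm_eq_abs] at h1
    have h2 : (((x b).natAbs : ℕ) : ℝ) ≤ (((64 * (1 + R) ^ 3) ^ D 0) ^ 19 : ℕ) := by
      push_cast
      rw [Nat.cast_natAbs]
      push_cast
      exact h1
    exact_mod_cast h2
  let P : MvPolynomial (Fin 3) ℤ := ∑ b, monomial (ex b) (x b)
  have hcoeff : ∀ b, coeff (ex b) P = x b := by
    intro b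
    simp only [P, coeff_sum, coeff_monomial]
    rw [Finset.sum_eq_single b]
    · simp
    · intro b' _ hb'
      rw [if_neg]
      intro h; exact hb' (ex_inj h)
    · simp
  have hDeg : Deg D P := by
    intro e he
    simp only [P, coeff_sum, coeff_monomial] at he
    obtain ⟨b, _, hb⟩ := Finset.exists_ne_zero_of_sum_ne_zero he
    have : ex b = e := by
      by_contra h
      rw [if_neg h] at hb
      exact hb rfl
    rw [← this]; exact ex_le b
  refine ⟨P, ?_, hDeg, ?_, ?_⟩
  · intro h
    apply hx0
    funext b
    rw [← hcoeff, h]; simp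
  · calc len P ≤ ∑ b, len (monomial (ex b) (x b)) := len_sum_le _ _
      _ ≤ ∑ b : Box D, ((64 * (1 + R) ^ 3) ^ D 0) ^ 19 := Finset.sum_le_sum fun b _ => (len_monomial_le _ _).trans (hxb b)
      _ = Fintype.card (Box D) * ((64 * (1 + R) ^ 3) ^ D 0) ^ 19 := by simp
      _ ≤ 8 ^ D 0 * ((64 * (1 + R) ^ 3) ^ D 0) ^ 19 := Nat.mul_le_mul_right _ hcard
      _ = _ := by
        generalize 64 * (1 + R) ^ 3 = Z
        rw [mul_pow, ← pow_mul, ← pow_mul, mul_comm (D 0) 19]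
  · intro i hi
    by_contra hne
    obtain ⟨e, he, hie⟩ := shift_le _ _ _ hne
    have he' := hDeg e (by rw [coeff_toR] at he; exact_mod_cast he)
    obtain ⟨b0, rfl⟩ := ex_surj i (fun s => (hie s).trans (he' s))
    apply hne
    have hP : toR P = ∑ b, monomial (ex b) ((x b : ℤ) : ℝ) := by
      simp only [P, toR, map_sum, map_monomial]; rfl
    rw [hP, map_sum, coeff_sum]
    have key : ∀ b : Box D, coeff (ex b0) (shift (fun _ => c) (monomial (ex b) ((x b : ℤ) : ℝ))) =
        ∑ l : Fin (d + 1), c ^ (l : ℕ) * ((A (⟨b0, hi⟩, l) b * x b : ℤ) : ℝ) := by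
      intro b
      rw [coeff_shift_monomial, Finset.prod_mul_distrib, Finset.prod_pow_eq_pow_sum, hca, Finset.mul_sum, Finset.mul_sum]
      refine Finset.sum_congr rfl fun l _ => ?_
      simp only [A]
      push_cast
      ring
    simp only [key]
    rw [Finset.sum_comm]
    refine Finset.sum_eq_zero fun l _ => ?_
    rw [← Finset.mul_sum]
    have h1 := congrFun hAx (⟨b0, hi⟩, l)
    rw [Matrix.mulVec, dotProduct] at h1
    have h2 : ((∑ b, A (⟨b0, hi⟩, l) b * x b : ℤ) : ℝ) = 0 := by rw [h1]; simp
    rw [Int.cast_sum] at h2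
    rw [h2, mul_zero]

end RothAux

namespace RothAux
open MvPolynomial

lemma shift_shift (a b : Fin 3 → ℝ) (P : MvPolynomial (Fin 3) ℝ) :
    shift a (shift b P) = shift (fun s => a s + b s) P := by
  have : (shift a).comp (shift b) = shift (fun s => a s + b s) := by
    apply MvPolynomial.algHom_ext
    intro i
    simp [shift, add_assoc]
  exact DFunLike.congr_fun this P

lemma lower (P : MvPolynomial (Fin 3) ℤ) (D : Fin 3 → ℕ) (hD : Deg D P) (p q : Fin 3 → ℤ) (hq : ∀ s, 0 < q s)
    (i : Ex) : ∃ z : ℤ, coeff i (shift (fun s => (p s / q s : ℝ)) (toR P)) * ∏ s, (q s : ℝ) ^ D s = z := by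
  refine ⟨∑ e ∈ (toR P).support, coeff e P * ∏ s, (((e s).choose (i s) : ℤ) * (p s ^ (e s - i s) * q s ^ (D s - (e s - i s)))), ?_⟩
  rw [coeff_shift, Finset.sum_mul]
  push_cast
  refine Finset.sum_congr rfl fun e he => ?_
  rw [mul_assoc, ← Finset.prod_mul_distrib, coeff_toR]
  congr 1
  refine Finset.prod_congr rfl fun s _ => ?_
  rw [mul_assoc]
  congr 1
  have hq0 : (q s : ℝ) ≠ 0 := by exact_mod_cast (hq s).ne'
  have hle : e s - i s ≤ D s := by
    have := hD e (by have := mem_support_iff.mp he; rw [coeff_toR] at this; exact_mod_cast this) s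
    omega
  rw [div_pow, div_mul_eq_mul_div, div_eq_iff (pow_ne_zero _ hq0), mul_assoc, ← pow_add]
  congr 2; omega

lemma cbound (P : MvPolynomial (Fin 3) ℤ) (D : Fin 3 → ℕ) (hD : Deg D P) (hD0 : ∀ s, D s ≤ D 0) (c : ℝ) (i : Ex) :
    |coeff i (shift (fun _ => c) (toR P))| ≤ len P * ((2 * (1 + |c|)) ^ 3) ^ D 0 := by
  rw [coeff_shift]
  refine (Finset.abs_sum_le_sum_abs _ _).trans ?_
  have h1 : ∀ e ∈ (toR P).support, |coeff e (toR P) * ∏ s, (((e s).choose (i s) : ℝ) * c ^ (e s - i s))| ≤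
      ((coeff e P).natAbs : ℝ) * ((2 * (1 + |c|)) ^ 3) ^ D 0 := by
    intro e he
    have he0 : coeff e P ≠ 0 := by have := mem_support_iff.mp he; rw [coeff_toR] at this; exact_mod_cast this
    rw [abs_mul, coeff_toR, Nat.cast_natAbs, Int.cast_abs]
    refine mul_le_mul_of_nonneg_left ?_ (abs_nonneg _)
    rw [Finset.abs_prod]
    calc _ ≤ ∏ s : Fin 3, (2 * (1 + |c|)) ^ D 0 := by
          refine Finset.prod_le_prod (fun _ _ => abs_nonneg _) fun s _ => ?_
          have hes := (hD e he0 s).trans (hD0 s)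
          rw [abs_mul, abs_pow, mul_pow, Nat.abs_cast]
          have h2 : ((e s).choose (i s) : ℝ) ≤ 2 ^ D 0 := by
            exact_mod_cast (Nat.choose_le_two_pow _ _).trans (Nat.pow_le_pow_right (by norm_num) hes)
          have h3 : |c| ^ (e s - i s) ≤ (1 + |c|) ^ D 0 := by
            calc |c| ^ (e s - i s) ≤ (1 + |c|) ^ (e s - i s) := by gcongr; linarith
              _ ≤ _ := pow_le_pow_right₀ (by linarith [abs_nonneg c]) (by omega)
          gcongr
      _ = _ := by rw [Finset.prod_const, Finset.card_univ, Fintype.card_fin, ← pow_mul, ← pow_mul, mul_comm (D 0) 3]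
  refine (Finset.sum_le_sum h1).trans ?_
  rw [← Finset.sum_mul]
  refine mul_le_mul_of_nonneg_right ?_ (by positivity)
  exact_mod_cast sum_le_len P _

lemma upper (P : MvPolynomial (Fin 3) ℤ) (D : Fin 3 → ℕ) (hD : Deg D P) (hD0 : ∀ s, D s ≤ D 0)
    (K : ℕ) (hK : 1 ≤ K) (hKD : ∀ s, K ≤ D s) (c : ℝ) (B : ℕ) (hB : len P ≤ B ^ D 0) (t ε : ℝ)
    (hidx : Idx (fun _ => c) (fun s => 1 / (D s : ℝ)) t (toR P)) (i : Ex)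
    (hi : ∑ s, (i s : ℝ) * (1 / (D s : ℝ)) < ε) (ξ ℓ : Fin 3 → ℝ) (C μ Λ : ℝ) (hC : 1 ≤ C) (hμ : 0 < μ) (hΛ : 0 ≤ Λ)
    (hΛℓ : ∀ s, Λ ≤ (D s + 1) * ℓ s) (hξ : ∀ s, |ξ s - c| ≤ C * Real.exp (- (μ * ℓ s))) :
    |coeff i (shift ξ (toR P))| ≤ (64 * C ^ 3 * (2 * (1 + |c|)) ^ 3 * B) ^ D 0 *
      Real.exp (- (μ * (K / (K + 1)) * Λ * (t - ε))) := by
  classical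
  have hKR : (1:ℝ) ≤ K := by exact_mod_cast hK
  have hDR : ∀ s, (K:ℝ) ≤ D s := fun s => by exact_mod_cast hKD s
  set Q := shift (fun _ => c) (toR P) with hQ
  have hs : shift ξ (toR P) = shift (fun s => ξ s - c) Q := by
    rw [hQ, shift_shift]; simp
  have hQD : ∀ e ∈ Q.support, ∀ s, e s ≤ D s := by
    intro e he s
    obtain ⟨e', he', hle⟩ := shift_le _ _ _ (mem_support_iff.mp he)
    exact (hle s).trans (hD e' (by rw [coeff_toR] at he'; exact_mod_cast he') s)
  have hcard : Q.support.card ≤ 8 ^ D 0 := by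
    have h1 : Q.support ⊆ Finset.univ.image (ex (D := D)) := by
      intro e he
      obtain ⟨b, hb⟩ := ex_surj e (hQD e he)
      exact Finset.mem_image.mpr ⟨b, Finset.mem_univ _, hb⟩
    refine (Finset.card_le_card h1).trans (Finset.card_image_le.trans ?_)
    rw [Finset.card_univ, card_Box]
    have h2 : ∀ s, D s + 1 ≤ 2 ^ D 0 := fun s => by
      have : D 0 < 2 ^ D 0 := Nat.lt_two_pow_self
      have := hD0 s
      omega
    calc _ ≤ 2 ^ D 0 * (2 ^ D 0 * 2 ^ D 0) := Nat.mul_le_mul (h2 0) (Nat.mul_le_mul (h2 1) (h2 2))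
      _ = 8 ^ D 0 := by rw [← mul_pow, ← mul_pow]; norm_num
  set E := Real.exp (- (μ * (K / (K + 1)) * Λ * (t - ε))) with hE
  have hterm : ∀ e ∈ Q.support, |coeff e Q * ∏ s, (((e s).choose (i s) : ℝ) * (ξ s - c) ^ (e s - i s))| ≤
      (8 * C ^ 3 * (2 * (1 + |c|)) ^ 3 * B) ^ D 0 * E := by
    intro e he
    by_cases hie : ∀ s, i s ≤ e s
    · have hw : t ≤ ∑ s, (e s : ℝ) * (1 / (D s : ℝ)) := by
        by_contra h
        push Not at h
        exact mem_support_iff.mp he (hidx e h)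
      have hcb := cbound P D hD hD0 c e
      rw [← hQ] at hcb
      have hBR : (len P : ℝ) ≤ (B:ℝ) ^ D 0 := by exact_mod_cast hB
      have hprod : |∏ s, (((e s).choose (i s) : ℝ) * (ξ s - c) ^ (e s - i s))| ≤ 8 ^ D 0 * (C ^ 3) ^ D 0 * E := by
        rw [Finset.abs_prod]
        calc _ ≤ ∏ s, ((2:ℝ) ^ D 0 * C ^ D 0 * Real.exp (- (μ * ((e s - i s : ℕ) * ℓ s)))) := by
              refine Finset.prod_le_prod (fun _ _ => abs_nonneg _) fun s _ => ?_
              have hes := (hQD e he s).trans (hD0 s)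
              rw [abs_mul, abs_pow, Nat.abs_cast, mul_assoc]
              have h2 : ((e s).choose (i s) : ℝ) ≤ 2 ^ D 0 := by
                exact_mod_cast (Nat.choose_le_two_pow _ _).trans (Nat.pow_le_pow_right (by norm_num) hes)
              have h3 : |ξ s - c| ^ (e s - i s) ≤ C ^ D 0 * Real.exp (- (μ * ((e s - i s : ℕ) * ℓ s))) := by
                calc |ξ s - c| ^ (e s - i s) ≤ (C * Real.exp (- (μ * ℓ s))) ^ (e s - i s) :=
                      pow_le_pow_left₀ (abs_nonneg _) (hξ s) _
                  _ = C ^ (e s - i s) * Real.exp (- (μ * ((e s - i s : ℕ) * ℓ s))) := by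
                      rw [mul_pow, ← Real.exp_nat_mul]; congr 2; ring
                  _ ≤ _ := by
                      gcongr
                      omega
              gcongr
          _ = 8 ^ D 0 * (C ^ 3) ^ D 0 * Real.exp (- (μ * ∑ s, ((e s - i s : ℕ) * ℓ s))) := by
              rw [Finset.prod_mul_distrib, ← Real.exp_sum, Finset.prod_const, Finset.card_univ, Fintype.card_fin,
                Finset.mul_sum, Finset.sum_neg_distrib, mul_pow, ← pow_mul, ← pow_mul, ← pow_mul, mul_comm (D 0) 3, pow_mul 2 3]
              norm_num
          _ ≤ _ := by
              gcongr
              rw [hE]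
              refine Real.exp_le_exp.mpr (neg_le_neg ?_)
              rw [mul_assoc, mul_assoc]
              refine mul_le_mul_of_nonneg_left ?_ hμ.le
              have hκ : (0:ℝ) ≤ K / (K + 1) * Λ := by positivity
              calc (K:ℝ) / (K + 1) * (Λ * (t - ε)) = K / (K + 1) * Λ * (t - ε) := by ring
                _ ≤ K / (K + 1) * Λ * ∑ s, ((e s - i s : ℕ) : ℝ) * (1 / (D s : ℝ)) := by
                    refine mul_le_mul_of_nonneg_left ?_ hκ
                    have : ∑ s, ((e s - i s : ℕ) : ℝ) * (1 / (D s : ℝ)) =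
                        ∑ s, (e s : ℝ) * (1 / (D s : ℝ)) - ∑ s, (i s : ℝ) * (1 / (D s : ℝ)) := by
                      rw [← Finset.sum_sub_distrib]
                      refine Finset.sum_congr rfl fun s _ => ?_
                      rw [Nat.cast_sub (hie s)]; ring
                    rw [this]; linarith
                _ ≤ _ := by
                    rw [Finset.mul_sum]
                    refine Finset.sum_le_sum fun s _ => ?_
                    have hx : (0:ℝ) ≤ ((e s - i s : ℕ) : ℝ) := by positivity
                    have hDs := hDR s
                    have h5 : K / (K + 1) * Λ * (1 / (D s : ℝ)) ≤ ℓ s := by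
                      have h6 : Λ / (D s + 1) ≤ ℓ s := by
                        rw [div_le_iff₀ (by linarith)]; linarith [hΛℓ s]
                      refine le_trans ?_ h6
                      have hDp : (0:ℝ) < D s := by linarith
                      rw [div_mul_eq_mul_div, mul_one_div, div_div, div_le_div_iff₀ (by positivity) (by linarith)]
                      have : K * Λ * (D s + 1) ≤ Λ * ((K + 1) * D s) := by nlinarith
                      exact this
                    calc _ = ((e s - i s : ℕ) : ℝ) * (K / (K + 1) * Λ * (1 / (D s : ℝ))) := by ring
                      _ ≤ _ := mul_le_mul_of_nonneg_left h5 hx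
      rw [abs_mul]
      calc _ ≤ ((B:ℝ) ^ D 0 * ((2 * (1 + |c|)) ^ 3) ^ D 0) * (8 ^ D 0 * (C ^ 3) ^ D 0 * E) := by
            gcongr
            exact hcb.trans (by gcongr)
        _ = _ := by
            generalize (2 * (1 + |c|)) ^ 3 = Z
            generalize C ^ 3 = Y
            rw [mul_pow, mul_pow, mul_pow]; ring
    · push Not at hie
      obtain ⟨s, hs⟩ := hie
      rw [Finset.prod_eq_zero (Finset.mem_univ s), mul_zero, abs_zero]
      · positivity
      · rw [Nat.choose_eq_zero_of_lt hs]; simp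
  rw [hs, coeff_shift]
  refine (Finset.abs_sum_le_sum_abs _ _).trans ((Finset.sum_le_card_nsmul _ _ _ hterm).trans ?_)
  rw [nsmul_eq_mul]
  have hcR : (Q.support.card : ℝ) ≤ 8 ^ D 0 := by exact_mod_cast hcard
  calc _ ≤ (8:ℝ) ^ D 0 * ((8 * C ^ 3 * (2 * (1 + |c|)) ^ 3 * B) ^ D 0 * E) := by gcongr
    _ = _ := by rw [← mul_assoc, ← mul_pow]; congr 2; ring

end RothAux

namespace RothAux
open MvPolynomial

lemma log_step (x y L g M : ℕ) (hx : 2 ≤ x) (hxy : x ^ g ≤ y) (hL : y ^ M ≤ L) : g * M ≤ Nat.log x L := by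
  refine Nat.le_log_of_pow_le (by omega) ?_
  rw [pow_mul]
  exact (Nat.pow_le_pow_left hxy M).trans hL

theorem approx (d : ℕ) (c : ℝ) (r : Fin (d + 1) → ℤ) (hc : c ^ (d + 1) = ∑ l, (r l : ℝ) * c ^ (l : ℕ))
    (K : ℕ) (hK : 1 ≤ K) (t ε μ C : ℝ) (ht : 0 < t) (hnum : (d + 1 : ℝ) * ((t + 3 / K) ^ 3 / 6) ≤ 95 / 100)
    (hε : 0 < ε) (hε1 : ε ≤ 1) (hμ : 0 < μ) (hC : 1 ≤ C)
    (hmain : 3 + 1 / 20 ≤ μ * (K / (K + 1)) * (t - ε)) :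
    ∃ Q0 : ℕ, ∀ (p : ℤ) (q : ℕ), 0 < q → IsCoprime p (q : ℤ) →
      |(p / q : ℝ) - c| ≤ C * Real.exp (- (μ * Real.log q)) → q ≤ Q0 := by
  by_contra hcon
  push Not at hcon
  obtain ⟨B, hB1, hB⟩ := aux_poly d c r hc K hK t ht hnum
  obtain ⟨G, g, hg, hR⟩ := roth_lemma ε hε hε1 K hK
  set B2 : ℝ := 64 * C ^ 3 * (2 * (1 + |c|)) ^ 3 * B with hB2
  have hBR : (1:ℝ) ≤ B := by exact_mod_cast hB1
  have hB2p : 1 ≤ B2 := by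
    have h1 : (1:ℝ) ≤ C ^ 3 := one_le_pow₀ hC
    have h2 : (1:ℝ) ≤ (2 * (1 + |c|)) ^ 3 := one_le_pow₀ (by linarith [abs_nonneg c])
    calc (1:ℝ) ≤ 64 * 1 * 1 * 1 := by norm_num
      _ ≤ _ := by rw [hB2]; gcongr
  obtain ⟨p0, q0, hq0, hco0, hap0, hbig0⟩ := hcon (2 + (64 * B) ^ G + ⌈B2 ^ 20⌉₊)
  obtain ⟨p1, q1, hq1, hco1, hap1, hbig1⟩ := hcon (q0 + q0 ^ g)
  obtain ⟨p2, q2, hq2, hco2, hap2, hbig2⟩ := hcon (q1 + q1 ^ g)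
  set L := q2 ^ K with hL
  have hLp : L ≠ 0 := by positivity
  have h20 : 2 ≤ q0 := by omega
  set D1 := Nat.log q1 L with hD1
  set D0 := Nat.log q0 L with hD0
  have e1 : g * K ≤ D1 := log_step q1 q2 L g K (by omega) (by omega) le_rfl
  have p1l : q1 ^ D1 ≤ L := Nat.pow_log_le_self _ hLp
  have p0l : q0 ^ D0 ≤ L := Nat.pow_log_le_self _ hLp
  have p1u : L < q1 ^ (D1 + 1) := Nat.lt_pow_succ_log_self (by omega) _
  have p0u : L < q0 ^ (D0 + 1) := Nat.lt_pow_succ_log_self (by omega) _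
  have e0 : g * D1 ≤ D0 := log_step q0 q1 L g D1 (by omega) (by omega) p1l
  have k1 : K ≤ D1 := le_trans (Nat.le_mul_of_pos_left _ hg) e1
  have k0 : D1 ≤ D0 := le_trans (Nat.le_mul_of_pos_left _ hg) e0
  let D : Fin 3 → ℕ := ![D0, D1, K]
  let qs : Fin 3 → ℕ := ![q0, q1, q2]
  let ps : Fin 3 → ℤ := ![p0, p1, p2]
  have hKD : ∀ s, K ≤ D s := by intro s; fin_cases s <;> simp [D] <;> omega
  have hDD : ∀ s, D s ≤ D 0 := by intro s; fin_cases s <;> simp [D] <;> omega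
  have hqs : ∀ s, 0 < qs s := by intro s; fin_cases s <;> simp [qs] <;> omega
  have hlow : ∀ s, qs s ^ D s ≤ L := by
    intro s; fin_cases s
    · exact p0l
    · exact p1l
    · exact le_rfl
  have hup : ∀ s, L ≤ qs s ^ (D s + 1) := by
    intro s; fin_cases s
    · exact p0u.le
    · exact p1u.le
    · exact Nat.pow_le_pow_right hq2 (by simp [D])
  have hco : ∀ s, IsCoprime (ps s) (qs s : ℤ) := by
    intro s; fin_cases s
    · exact hco0
    · exact hco1
    · exact hco2
  have hap : ∀ s, |(ps s / qs s : ℝ) - c| ≤ C * Real.exp (- (μ * Real.log (qs s))) := by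
    intro s; fin_cases s
    · exact hap0
    · exact hap1
    · exact hap2
  obtain ⟨P, hP0, hPD, hPl, hPi⟩ := hB D hKD hDD
  have hni := hR B ps (fun s => (qs s : ℤ)) D P hB1 (fun s => by exact_mod_cast hqs s) hco rfl e1 e0
    (by exact_mod_cast p0l) (by exact_mod_cast p0l.trans p1u.le)
    (by
      have : (64 * B) ^ G ≤ q0 := by omega
      exact_mod_cast this) hP0 hPD hPl
  unfold Idx at hni
  push Not at hni
  obtain ⟨i, hi, hne⟩ := hni
  have hup' := upper P D hPD hDD K hK hKD c B hPl t ε hPi i hi (fun s => (ps s / ((qs s : ℤ) : ℝ) : ℝ)) (fun s => Real.log (qs s))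
    C μ (Real.log L) hC hμ (Real.log_natCast_nonneg _) (fun s => by
      have h1 : (L:ℝ) ≤ (qs s : ℝ) ^ (D s + 1) := by exact_mod_cast hup s
      have h2 := Real.log_le_log (by positivity) h1
      rw [Real.log_pow] at h2
      push_cast at h2
      exact h2) (fun s => by exact_mod_cast hap s)
  obtain ⟨z, hz⟩ := lower P D hPD ps (fun s => (qs s : ℤ)) (fun s => by exact_mod_cast hqs s) i
  set A := coeff i (shift (fun s => (ps s / ((qs s : ℤ) : ℝ) : ℝ)) (toR P)) with hA
  have hLR : (0:ℝ) < L := by positivity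
  have hprod : ∏ s, (((qs s : ℤ) : ℝ)) ^ D s ≤ (L:ℝ) ^ 3 := by
    calc _ ≤ ∏ s : Fin 3, (L:ℝ) := by
          refine Finset.prod_le_prod (fun _ _ => by positivity) fun s _ => ?_
          exact_mod_cast hlow s
      _ = _ := by simp
  have hprodp : 0 < ∏ s, (((qs s : ℤ) : ℝ)) ^ D s := by
    refine Finset.prod_pos fun s _ => ?_
    have := hqs s
    positivity
  have hz0 : z ≠ 0 := by
    rintro rfl
    rw [Int.cast_zero] at hz
    rcases mul_eq_zero.mp hz with h | h
    · exact hne h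
    · exact hprodp.ne' h
  have hz1 : (1:ℝ) ≤ |(z:ℝ)| := by exact_mod_cast Int.one_le_abs hz0
  have hAl : 1 ≤ |A| * (L:ℝ) ^ 3 := by
    rw [← hz, abs_mul, abs_of_pos hprodp] at hz1
    exact hz1.trans (by gcongr)
  set Λ := Real.log L with hΛ
  have hΛ0 : 0 ≤ Λ := Real.log_natCast_nonneg _
  have hLe : (L:ℝ) ^ 3 = Real.exp (3 * Λ) := by
    rw [show (3:ℝ) = ((3:ℕ):ℝ) by norm_num, Real.exp_nat_mul, hΛ, Real.exp_log hLR]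
  have hfin : 1 ≤ B2 ^ D0 * Real.exp (- (Λ / 20)) := by
    calc 1 ≤ |A| * (L:ℝ) ^ 3 := hAl
      _ ≤ (B2 ^ D0 * Real.exp (- (μ * (K / (K + 1)) * Λ * (t - ε)))) * Real.exp (3 * Λ) := by
          rw [hLe]; exact mul_le_mul_of_nonneg_right hup' (Real.exp_pos _).le
      _ = B2 ^ D0 * Real.exp (- (μ * (K / (K + 1)) * Λ * (t - ε)) + 3 * Λ) := by
          rw [mul_assoc, ← Real.exp_add]
      _ ≤ _ := by
          have hx : - (μ * (K / (K + 1)) * Λ * (t - ε)) + 3 * Λ ≤ - (Λ / 20) := by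
            have := mul_le_mul_of_nonneg_right hmain hΛ0
            linarith
          gcongr
  have hq0R : B2 ^ 20 < (q0:ℝ) := by
    have h1 := Nat.le_ceil (B2 ^ 20)
    have h2 : ((2 + (64 * B) ^ G + ⌈B2 ^ 20⌉₊ : ℕ) : ℝ) < (q0:ℝ) := by exact_mod_cast hbig0
    push_cast at h2
    have h3 : (0:ℝ) ≤ (64 * B) ^ G := by positivity
    linarith
  have hD0p : 0 < D0 := by omega
  have h1 : (B2 ^ D0) ^ 20 < (L:ℝ) := by
    calc (B2 ^ D0) ^ 20 = (B2 ^ 20) ^ D0 := by rw [← pow_mul, ← pow_mul, mul_comm]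
      _ < (q0:ℝ) ^ D0 := pow_lt_pow_left₀ hq0R (by positivity) hD0p.ne'
      _ ≤ L := by exact_mod_cast p0l
  have h2 : (1:ℝ) ≤ (B2 ^ D0) ^ 20 * Real.exp (-Λ) := by
    calc (1:ℝ) ≤ (B2 ^ D0 * Real.exp (- (Λ / 20))) ^ 20 := one_le_pow₀ hfin
      _ = _ := by rw [mul_pow, ← Real.exp_nat_mul]; congr 2; push_cast; ring
  have h3 : (B2 ^ D0) ^ 20 * Real.exp (-Λ) < L * Real.exp (-Λ) := mul_lt_mul_of_pos_right h1 (Real.exp_pos _)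
  rw [Real.exp_neg, hΛ, Real.exp_log hLR, mul_inv_cancel₀ hLR.ne'] at h3
  rw [Real.exp_neg, hΛ, Real.exp_log hLR] at h2
  linarith

end RothAux

namespace RothAux

lemma int_gap (y : ℝ) : ∃ δ : ℝ, 0 < δ ∧ ∀ m : ℤ, (m : ℝ) ≠ y → δ ≤ |(m : ℝ) - y| := by
  by_cases h : Int.fract y = 0
  · refine ⟨1, one_pos, fun m hm => ?_⟩
    have hy : y = (⌊y⌋ : ℝ) := by have := Int.floor_add_fract y; rw [h, add_zero] at this; exact this.symm
    rw [hy] at hm ⊢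
    have : m - ⌊y⌋ ≠ 0 := by intro h0; exact hm (by exact_mod_cast sub_eq_zero.mp h0)
    exact_mod_cast Int.one_le_abs this
  · have h0 : 0 < Int.fract y := lt_of_le_of_ne (Int.fract_nonneg y) (Ne.symm h)
    have h1 := Int.fract_lt_one y
    refine ⟨min (Int.fract y) (1 - Int.fract y), lt_min h0 (by linarith), fun m _ => ?_⟩
    have hy := Int.floor_add_fract y
    rcases le_or_gt m ⌊y⌋ with hm | hm
    · have : (m:ℝ) ≤ ⌊y⌋ := by exact_mod_cast hm
      refine (min_le_left _ _).trans ?_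
      rw [abs_sub_comm]
      exact le_trans (by linarith) (le_abs_self _)
    · have : (⌊y⌋:ℝ) + 1 ≤ m := by exact_mod_cast hm
      refine (min_le_right _ _).trans ?_
      exact le_trans (by linarith) (le_abs_self _)

lemma finish (c C μ : ℝ) (hC : 1 ≤ C) (hμ : 0 < μ)
    (h : ∃ Q0 : ℕ, ∀ (p : ℤ) (q : ℕ), 0 < q → IsCoprime p (q : ℤ) →
      |(p / q : ℝ) - c| ≤ C * Real.exp (- (μ * Real.log q)) → q ≤ Q0) :
    ∃ N : ℕ, ∀ (b : ℤ) (q : ℕ), 0 < q → |(b / q : ℝ) - c| ≤ C * Real.exp (- (μ * Real.log q)) →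
      q ≤ N ∨ (b / q : ℝ) = c := by
  obtain ⟨Q0, hQ⟩ := h
  obtain ⟨δ, hδ, hgap⟩ := int_gap ((Q0.factorial : ℝ) * c)
  set F : ℝ := (Q0.factorial : ℝ) with hF
  have hFp : 0 < F := by rw [hF]; exact_mod_cast Nat.factorial_pos Q0
  refine ⟨⌈Real.exp (Real.log (C * F / δ) / μ)⌉₊, fun b q hq hb => ?_⟩
  by_cases hbc : (b / q : ℝ) = c
  · exact Or.inr hbc
  left
  have hqR : (0:ℝ) < q := by exact_mod_cast hq
  set x : ℚ := (b : ℚ) / (q : ℚ) with hx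
  have hxR : (x : ℝ) = (b / q : ℝ) := by rw [hx]; push_cast; rfl
  have hxn : (x : ℝ) = (x.num / x.den : ℝ) := Rat.cast_def x
  have hdle : x.den ≤ q := by
    have h1 : (x.den : ℤ) ∣ (q : ℤ) := by
      have := Rat.den_dvd b q
      rw [hx]; exact_mod_cast this
    exact Nat.le_of_dvd hq (by exact_mod_cast h1)
  have hdQ : x.den ≤ Q0 := by
    refine hQ x.num x.den x.pos ?_ ?_
    · have := x.reduced
      rw [Int.isCoprime_iff_gcd_eq_one]
      simpa [Int.gcd, Nat.Coprime] using this
    · rw [← hxn, hxR]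
      refine hb.trans ?_
      have h1 : Real.log x.den ≤ Real.log q := Real.log_le_log (by exact_mod_cast x.pos) (by exact_mod_cast hdle)
      have h2 : μ * Real.log x.den ≤ μ * Real.log q := mul_le_mul_of_nonneg_left h1 hμ.le
      have h3 := Real.exp_le_exp.mpr (neg_le_neg h2)
      exact mul_le_mul_of_nonneg_left h3 (by linarith)
  obtain ⟨f, hf⟩ := Nat.dvd_factorial x.pos hdQ
  have hdR : (0:ℝ) < x.den := by exact_mod_cast x.pos
  have hm : ((f * x.num : ℤ) : ℝ) = F * x := by
    rw [hxn, hF, hf]; push_cast; field_simp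
  have hg := hgap (f * x.num) (by
    rw [hm]; intro h0
    exact hbc (by rw [← hxR]; exact mul_left_cancel₀ hFp.ne' h0))
  rw [hm, hxR, ← mul_sub, abs_mul, abs_of_pos hFp] at hg
  have h1 : δ ≤ C * F * Real.exp (-(μ * Real.log q)) := by
    have := mul_le_mul_of_nonneg_left hb hFp.le
    linarith
  have hCF : 0 < C * F := by positivity
  have h2 : Real.exp (μ * Real.log q) ≤ C * F / δ := by
    rw [Real.exp_neg, ← div_eq_mul_inv, le_div_iff₀ (Real.exp_pos _)] at h1
    rw [le_div_iff₀ hδ]; linarith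
  have h3 : μ * Real.log q ≤ Real.log (C * F / δ) := by
    rw [Real.le_log_iff_exp_le (by positivity)]; exact h2
  have h4 : Real.log q ≤ Real.log (C * F / δ) / μ := by
    rw [le_div_iff₀ hμ]; linarith
  have h5 : (q:ℝ) ≤ Real.exp (Real.log (C * F / δ) / μ) := by
    rw [← Real.log_le_iff_le_exp hqR]; exact h4
  exact_mod_cast h5.trans (Nat.le_ceil _)

noncomputable def SP : ℕ → Polynomial ℤ
  | 0 => 1
  | 1 => Polynomial.X + 1
  | (j + 2) => Polynomial.X * SP (j + 1) - SP j

lemma SP_monic (j : ℕ) : ((SP j).Monic ∧ (SP j).natDegree = j) ∧ ((SP (j + 1)).Monic ∧ (SP (j + 1)).natDegree = j + 1) := by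
  induction j with
  | zero =>
    refine ⟨⟨Polynomial.monic_one, by simp [SP]⟩, ?_, ?_⟩
    · simpa [SP] using Polynomial.monic_X_add_C (1:ℤ)
    · simpa [SP] using Polynomial.natDegree_X_add_C (1:ℤ)
  | succ j ih =>
    obtain ⟨⟨m1, d1⟩, m2, d2⟩ := ih
    refine ⟨⟨m2, d2⟩, ?_⟩
    have hm : (Polynomial.X * SP (j + 1)).Monic := Polynomial.monic_X.mul m2
    have hd : (Polynomial.X * SP (j + 1)).natDegree = j + 2 := by
      rw [Polynomial.monic_X.natDegree_mul m2, d2, Polynomial.natDegree_X]; omega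
    have hlt : (SP j).degree < (Polynomial.X * SP (j + 1)).degree := by
      apply Polynomial.degree_lt_degree; omega
    show (Polynomial.X * SP (j + 1) - SP j).Monic ∧ _
    refine ⟨hm.sub_of_left hlt, ?_⟩
    show (Polynomial.X * SP (j + 1) - SP j).natDegree = _
    rw [Polynomial.natDegree_sub_eq_left_of_natDegree_lt (by omega), hd]

lemma SP_eval (w : ℝ) (j : ℕ) :
    Polynomial.aeval (2 * Real.cos w) (SP j) * Real.sin (w / 2) = Real.sin ((2 * j + 1) * (w / 2)) ∧
    Polynomial.aeval (2 * Real.cos w) (SP (j + 1)) * Real.sin (w / 2) = Real.sin ((2 * (j + 1) + 1) * (w / 2)) := by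
  have key : ∀ x : ℝ, Real.sin (x + w) = 2 * Real.cos w * Real.sin x - Real.sin (x - w) := by
    intro x; rw [Real.sin_add, Real.sin_sub]; ring
  induction j with
  | zero =>
    refine ⟨by simp [SP], ?_⟩
    have := key (w / 2)
    rw [show w / 2 - w = -(w / 2) by ring, Real.sin_neg] at this
    simp only [SP, map_add, Polynomial.aeval_X, map_one]
    rw [show (2 * (((0:ℕ):ℝ) + 1) + 1) * (w / 2) = w / 2 + w by push_cast; ring, this]
    ring
  | succ j ih =>
    refine ⟨by rw [ih.2]; push_cast; rfl, ?_⟩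
    have h := key ((2 * (j + 1) + 1) * (w / 2))
    rw [show (2 * ((j:ℝ) + 1) + 1) * (w / 2) - w = (2 * j + 1) * (w / 2) by ring] at h
    rw [show (2 * (((j + 1 : ℕ):ℝ) + 1) + 1) * (w / 2) = (2 * ((j:ℝ) + 1) + 1) * (w / 2) + w by push_cast; ring, h,
      ← ih.1, ← ih.2]
    show Polynomial.aeval (2 * Real.cos w) (Polynomial.X * SP (j + 1) - SP j) * _ = _
    rw [map_sub, map_mul, Polynomial.aeval_X]; ring

lemma alg_c (h : ℕ) (hh : 1 ≤ h) (w : ℝ) (hw : Real.sin ((2 * h + 1) * (w / 2)) = 0) :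
    ∃ d : ℕ, d + 1 ≤ h ∧ ∃ r : Fin (d + 1) → ℤ,
      (2 * Real.cos w) ^ (d + 1) = ∑ l, (r l : ℝ) * (2 * Real.cos w) ^ (l : ℕ) := by
  by_cases hs : Real.sin (w / 2) = 0
  · refine ⟨0, hh, fun _ => 2, ?_⟩
    have : Real.cos w = 1 := by
      have h1 := Real.cos_sq' (w / 2)
      have h2 := Real.cos_two_mul (w / 2)
      rw [show 2 * (w / 2) = w by ring, h1, hs] at h2
      rw [h2]; norm_num
    simp [this]
  · obtain ⟨d, rfl⟩ : ∃ d, h = d + 1 := ⟨h - 1, by omega⟩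
    refine ⟨d, le_rfl, fun l => - (SP (d + 1)).coeff l, ?_⟩
    have h0 := (SP_eval w (d + 1)).1
    rw [hw] at h0
    have h1 := (mul_eq_zero.mp h0).resolve_right hs
    obtain ⟨hm, hd⟩ := (SP_monic (d + 1)).1
    rw [Polynomial.aeval_eq_sum_range, hd, Finset.sum_range_succ] at h1
    have hc : (SP (d + 1)).coeff (d + 1) = 1 := by
      have := hm.coeff_natDegree
      rwa [hd] at this
    rw [hc, one_smul] at h1
    rw [Fin.sum_univ_eq_sum_range (fun l => ((- (SP (d + 1)).coeff l : ℤ) : ℝ) * (2 * Real.cos w) ^ l) (d + 1)]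
    have : ∑ i ∈ Finset.range (d + 1), ((- (SP (d + 1)).coeff i : ℤ) : ℝ) * (2 * Real.cos w) ^ i =
        - ∑ i ∈ Finset.range (d + 1), (SP (d + 1)).coeff i • (2 * Real.cos w) ^ i := by
      rw [← Finset.sum_neg_distrib]
      refine Finset.sum_congr rfl fun i _ => ?_
      rw [zsmul_eq_mul]; push_cast; ring
    rw [this]; linarith

lemma bound_k (h : ℕ) (hh : 6 ≤ h) (w : ℝ) (hw : Real.sin ((2 * h + 1) * (w / 2)) = 0) :
    ∃ N : ℕ, ∀ (b : ℤ) (q : ℕ), 0 < q →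
      |(b / q : ℝ) - 2 * Real.cos w| ≤ 2 * Real.exp (- (((2 * h + 1 : ℝ) / 4) * Real.log q)) →
      q ≤ N ∨ (b / q : ℝ) = 2 * Real.cos w := by
  obtain ⟨d, hd, r, hr⟩ := alg_c h (by omega) w hw
  have hhR : (6:ℝ) ≤ h := by exact_mod_cast hh
  have hdR : (d:ℝ) + 1 ≤ h := by exact_mod_cast hd
  set m : ℝ := 2 * h + 1 with hm
  have hm13 : 13 ≤ m := by rw [hm]; linarith
  have hmp : 0 < m := by linarith
  have hKc : ((25 * (2 * h + 1) : ℕ) : ℝ) = 25 * m := by rw [hm]; push_cast; ring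
  refine finish _ 2 (m / 4) (by norm_num) (by positivity)
    (approx d _ r hr (25 * (2 * h + 1)) (by omega) (63 / (5 * m)) (1 / (5 * m)) (m / 4) 2 (by positivity) ?_
      (by positivity) ?_ (by positivity) (by norm_num) ?_)
  · rw [hKc]
    have e1 : 63 / (5 * m) + 3 / (25 * m) = (318 / 25) / m := by field_simp; norm_num
    rw [e1, div_pow]
    have h1 : ((d:ℝ) + 1) ≤ (m - 1) / 2 := by rw [hm]; linarith
    have hpoly : 0 ≤ 12 * m ^ 3 - 2197 * m + 2197 := by
      have : 12 * m ^ 3 - 2197 * m + 2197 = (m - 13) * (12 * m ^ 2 + 156 * m - 169) := by ring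
      rw [this]
      have : 0 ≤ m - 13 := by linarith
      have : 0 ≤ 12 * m ^ 2 + 156 * m - 169 := by nlinarith
      positivity
    have hm3 : 0 < m ^ 3 := by positivity
    calc _ ≤ (m - 1) / 2 * ((318 / 25) ^ 3 / m ^ 3 / 6) := by gcongr
      _ = ((m - 1) * (318 / 25) ^ 3 / 12) / m ^ 3 := by ring
      _ ≤ _ := by
        rw [div_le_iff₀ hm3]; linarith
  · rw [div_le_one (by positivity)]; linarith
  · rw [hKc]
    have : m / 4 * (25 * m / (25 * m + 1)) * (63 / (5 * m) - 1 / (5 * m)) = 31 / 10 * (25 * m / (25 * m + 1)) := by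
      field_simp; norm_num
    rw [this, mul_div_assoc', le_div_iff₀ (by positivity)]
    linarith

end RothAux

namespace RothAux

lemma near_odd (x : ℝ) (hx : 0 ≤ x) : ∃ k : ℕ, (k:ℝ) * Real.pi ≤ x ∧
    |x - (2 * k + 1) * Real.pi / 2| ≤ Real.pi / 2 * |Real.cos x| := by
  have hπ := Real.pi_pos
  refine ⟨⌊x / Real.pi⌋₊, ?_, ?_⟩
  · have := Nat.floor_le (div_nonneg hx hπ.le)
    rwa [le_div_iff₀ hπ] at this
  · set k := ⌊x / Real.pi⌋₊
    have h1 : (k:ℝ) * Real.pi ≤ x := by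
      have := Nat.floor_le (div_nonneg hx hπ.le)
      rwa [le_div_iff₀ hπ] at this
    have h2 : x ≤ ((k:ℝ) + 1) * Real.pi := by
      have := (Nat.lt_floor_add_one (x / Real.pi)).le
      rwa [div_le_iff₀ hπ] at this
    set y := x - (2 * k + 1) * Real.pi / 2 with hy
    have hxy : x = (y + Real.pi / 2) + k * Real.pi := by rw [hy]; ring
    have hcos : |Real.cos x| = |Real.sin y| := by
      rw [hxy, Real.cos_add_nat_mul_pi, abs_mul, abs_pow, abs_neg, abs_one, one_pow, one_mul,
        Real.cos_add_pi_div_two, abs_neg]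
    have hyl : |y| ≤ Real.pi / 2 := by
      rw [abs_le]; constructor <;> rw [hy] <;> linarith
    have h3 := Real.mul_le_sin (abs_nonneg y) hyl
    have h4 : |Real.sin y| = Real.sin |y| := by
      rcases abs_cases y with ⟨h, _⟩ | ⟨h, _⟩
      · rw [h] at h3 ⊢; rw [abs_of_nonneg]; exact le_trans (by positivity) h3
      · have h5 : 0 ≤ Real.sin |y| := le_trans (by positivity) h3
        rw [h, Real.sin_neg] at h5 ⊢
        rw [abs_of_nonpos (by linarith)]
    rw [hcos, h4]
    calc |y| = Real.pi / 2 * (2 / Real.pi * |y|) := by field_simp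
      _ ≤ _ := by gcongr

lemma alpha_facts (q a1 : ℤ) (hq : 2 ≤ q) (ha : a1 ^ 2 ≤ 4 * q) (α : ℂ) (h : α ^ 2 - a1 * α + q = 0) :
    α.re = a1 / 2 ∧ ‖α‖ = Real.sqrt q := by
  have haR : (a1:ℝ) ^ 2 ≤ 4 * q := by exact_mod_cast ha
  have hre := congrArg Complex.re h
  have him := congrArg Complex.im h
  simp [pow_two] at hre him
  have h1 : α.re = a1 / 2 := by
    by_cases h0 : α.im = 0
    · rw [h0] at hre
      have : (α.re - a1 / 2) ^ 2 ≤ 0 := by nlinarith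
      nlinarith [pow_eq_zero_iff (two_ne_zero) |>.mp (le_antisymm this (sq_nonneg _))]
    · have : α.im * (2 * α.re - a1) = 0 := by linarith
      have := (mul_eq_zero.mp this).resolve_left h0
      linarith
  refine ⟨h1, ?_⟩
  have h2 : (q:ℝ) = ‖α‖ ^ 2 := by
    rw [Complex.sq_norm, Complex.normSq_apply]
    have h3 : (a1:ℝ) = 2 * α.re := by linarith
    rw [h3] at hre
    linarith
  rw [h2, Real.sqrt_sq (norm_nonneg _)]

lemma exp_pow (θ : ℝ) (m : ℕ) : Complex.exp (θ * Complex.I) ^ m = Complex.exp ((m * θ : ℝ) * Complex.I) := by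
  rw [← Complex.exp_nat_mul]; congr 1; push_cast; ring

lemma rootu (θ : ℝ) (N : ℕ) (h : Real.cos (2 * N * θ) = 1) : Complex.exp (θ * Complex.I) ^ (2 * N) = 1 := by
  have hs : Real.sin (2 * N * θ) = 0 := by
    have := Real.sin_sq_add_cos_sq (2 * N * θ)
    rw [h] at this
    have : Real.sin (2 * N * θ) ^ 2 = 0 := by linarith
    exact pow_eq_zero_iff (two_ne_zero) |>.mp this
  rw [exp_pow, Complex.exp_mul_I, ← Complex.ofReal_cos, ← Complex.ofReal_sin]
  rw [show ((2 * N : ℕ) : ℝ) * θ = 2 * N * θ by push_cast; ring]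
  rw [h, hs]; simp

end RothAux

open RothAux

/-- For every integer `n ≥ 13` there is a constant `qₙ` such that whenever
integers `q, a₁` with `q ≥ 2`, `a₁² ≤ 4q` satisfy `−aₙ = ⌊2·q^{n/2}⌋`, either `q ≤ qₙ` or the
pair `(q, a₁)` is supersingular (i.e. `β` is a root of unity). -/
theorem bounded_q_or_supersingular (n : ℕ) (hn : 13 ≤ n) :
    ∃ qn : ℤ, ∀ q a1 : ℤ, 2 ≤ q → a1 ^ 2 ≤ 4 * q →
      ∀ α β : ℂ, α ^ 2 - a1 * α + q = 0 → 0 ≤ α.im → β = α / (Real.sqrt q : ℂ) →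
      ∀ a : ℕ → ℤ, (∀ k : ℕ, (a k : ℂ) = α ^ k + (starRingEnd ℂ) α ^ k) →
      -(a n) = ⌊2 * Real.sqrt q ^ n⌋ →
      q ≤ qn ∨ ∃ k : ℕ, 0 < k ∧ β ^ k = 1 := by
  have hπ := Real.pi_pos
  have hnR : (13:ℝ) ≤ n := by exact_mod_cast hn
  have hn0 : (n:ℝ) ≠ 0 := by linarith
  have setup : ∀ q a1 : ℤ, 2 ≤ q → a1 ^ 2 ≤ 4 * q →
      ∀ α β : ℂ, α ^ 2 - a1 * α + q = 0 → 0 ≤ α.im → β = α / (Real.sqrt q : ℂ) →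
      ∀ a : ℕ → ℤ, (∀ k : ℕ, (a k : ℂ) = α ^ k + (starRingEnd ℂ) α ^ k) →
      ∃ θ : ℝ, 0 ≤ θ ∧ θ ≤ Real.pi ∧ β = Complex.exp (θ * Complex.I) ∧
        (a n : ℝ) = 2 * Real.sqrt q ^ n * Real.cos (n * θ) ∧ ((a1 ^ 2 - 2 * q) / q : ℝ) = 2 * Real.cos (2 * θ) := by
    intro q a1 hq ha α β hα him hβ a haa
    obtain ⟨hre, hnorm⟩ := alpha_facts q a1 hq ha α hα
    have hqR : (0:ℝ) < q := by exact_mod_cast (by omega : 0 < q)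
    have hs : 0 < Real.sqrt q := Real.sqrt_pos.mpr hqR
    have hsC : (Real.sqrt q : ℂ) ≠ 0 := by exact_mod_cast hs.ne'
    have hα2 : α = (Real.sqrt q : ℂ) * Complex.exp (α.arg * Complex.I) := by
      rw [← hnorm]; exact (Complex.norm_mul_exp_arg_mul_I α).symm
    refine ⟨α.arg, Complex.arg_nonneg_iff.mpr him, Complex.arg_le_pi α, ?_, ?_, ?_⟩
    · rw [hβ, div_eq_iff hsC, mul_comm]; exact hα2
    · have h1 := congrArg Complex.re (haa n)
      rw [← map_pow, Complex.add_re, Complex.conj_re, Complex.intCast_re] at h1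
      have h2 : (α ^ n).re = Real.sqrt q ^ n * Real.cos (n * α.arg) := by
        conv_lhs => rw [hα2]
        rw [mul_pow, exp_pow, ← Complex.ofReal_pow, Complex.re_ofReal_mul, Complex.exp_ofReal_mul_I_re]
      rw [h1, h2]; ring
    · have hc : Real.cos α.arg = (a1 / 2) / Real.sqrt q := by
        rw [Complex.cos_arg, hre, hnorm]
        intro h0; rw [h0, norm_zero] at hnorm; linarith
      rw [Real.cos_two_mul, hc, div_pow, Real.sq_sqrt hqR.le]
      field_simp
  rcases Nat.even_or_odd' n with ⟨m, hm | hm⟩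
  · refine ⟨0, fun q a1 hq ha α β hα him hβ a haa hfl => Or.inr ?_⟩
    obtain ⟨θ, _, _, hβθ, han, _⟩ := setup q a1 hq ha α β hα him hβ a haa
    refine ⟨2 * n, by omega, ?_⟩
    rw [hβθ]
    apply rootu
    have hqR : (0:ℝ) < q := by exact_mod_cast (by omega : 0 < q)
    have hsq : Real.sqrt q ^ n = (q:ℝ) ^ m := by rw [hm, pow_mul, Real.sq_sqrt hqR.le]
    rw [hsq, show (2 * (q:ℝ) ^ m) = ((2 * q ^ m : ℤ) : ℝ) by push_cast; rfl, Int.floor_intCast] at hfl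
    have h1 : -(a n : ℝ) = 2 * (q:ℝ) ^ m := by exact_mod_cast hfl
    rw [hsq] at han
    have h2 : (q:ℝ) ^ m * (Real.cos (n * θ) + 1) = 0 := by linarith
    have h3 := (mul_eq_zero.mp h2).resolve_left (by positivity)
    have h4 : Real.cos (n * θ) = -1 := by linarith
    rw [mul_assoc, Real.cos_two_mul, h4]; norm_num
  · have hmR : (n:ℝ) = 2 * m + 1 := by rw [hm]; push_cast; ring
    have hex : ∀ k : ℕ, ∃ N : ℕ, ∀ (b : ℤ) (q : ℕ), 0 < q →
        |(b / q : ℝ) - 2 * Real.cos (2 * ((2 * k + 1) * Real.pi / n))| ≤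
          2 * Real.exp (- (((2 * m + 1 : ℝ) / 4) * Real.log q)) →
        q ≤ N ∨ (b / q : ℝ) = 2 * Real.cos (2 * ((2 * k + 1) * Real.pi / n)) := by
      intro k
      refine bound_k m (by omega) _ ?_
      rw [← hmR, show (n:ℝ) * (2 * ((2 * k + 1) * Real.pi / n) / 2) = ((2 * k + 1 : ℕ) : ℝ) * Real.pi by
        push_cast; field_simp]
      exact Real.sin_nat_mul_pi _
    choose N hN using hex
    refine ⟨((∑ k ∈ Finset.range (n + 1), N k : ℕ) : ℤ), fun q a1 hq ha α β hα him hβ a haa hfl => ?_⟩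
    obtain ⟨θ, hθ0, hθπ, hβθ, han, hcos⟩ := setup q a1 hq ha α β hα him hβ a haa
    lift q to ℕ using by omega
    have hq0 : 0 < q := by omega
    have hqR : (0:ℝ) < q := by exact_mod_cast hq0
    simp only [Int.cast_natCast] at *
    obtain ⟨k, hk1, hk2⟩ := near_odd (n * θ / 2) (by positivity)
    have hkn : k ∈ Finset.range (n + 1) := by
      rw [Finset.mem_range]
      have h1 : (k:ℝ) * Real.pi ≤ n * Real.pi := by
        have : (n:ℝ) * θ ≤ n * Real.pi := by gcongr
        have : 0 ≤ (n:ℝ) * Real.pi := by positivity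
        linarith
      have h2 : (k:ℝ) ≤ n := le_of_mul_le_mul_right h1 hπ
      have h3 : k ≤ n := by exact_mod_cast h2
      omega
    set θk := (2 * (k:ℝ) + 1) * Real.pi / n with hθk
    set E := Real.exp (- (((2 * m + 1 : ℝ) / 4) * Real.log q)) with hE
    have hE0 : 0 < E := Real.exp_pos _
    have hES : E ^ 2 * Real.sqrt q ^ n = 1 := by
      have h1 : Real.sqrt q = Real.exp (Real.log q / 2) := by
        rw [← Real.log_sqrt hqR.le, Real.exp_log (Real.sqrt_pos.mpr hqR)]
      rw [h1, hE, ← Real.exp_nat_mul, ← Real.exp_nat_mul, ← Real.exp_add, Real.exp_eq_one_iff]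
      rw [hmR]; push_cast; ring
    have hfl2 : 2 * Real.sqrt q ^ n < -(a n : ℝ) + 1 := by
      have h1 := Int.lt_floor_add_one (2 * Real.sqrt (q:ℝ) ^ n)
      rw [← hfl] at h1
      push_cast at h1
      exact h1
    set x := (n:ℝ) * θ / 2 with hx
    have hcx : Real.cos (n * θ) = 2 * Real.cos x ^ 2 - 1 := by
      rw [← Real.cos_two_mul, hx]; congr 1; ring
    have h4 : Real.sqrt q ^ n * (4 * Real.cos x ^ 2) < 1 := by
      rw [han, hcx] at hfl2; linarith
    have h5 : 4 * Real.cos x ^ 2 ≤ E ^ 2 := by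
      have := mul_le_mul_of_nonneg_left h4.le (sq_nonneg E)
      rw [← mul_assoc, hES] at this
      linarith
    have h6 : |Real.cos x| ≤ E / 2 := by
      refine abs_le_of_sq_le_sq ?_ (by positivity)
      rw [div_pow]; linarith
    have h7 : |θ - θk| ≤ E / 2 := by
      have e1 : θ - θk = 2 / n * (x - (2 * k + 1) * Real.pi / 2) := by
        rw [hx, hθk]; field_simp
      rw [e1, abs_mul, abs_of_nonneg (by positivity)]
      calc 2 / n * |x - (2 * k + 1) * Real.pi / 2| ≤ 2 / n * (Real.pi / 2 * |Real.cos x|) := by gcongr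
        _ = Real.pi / n * |Real.cos x| := by ring
        _ ≤ 1 * |Real.cos x| := by
            gcongr
            rw [div_le_one (by linarith)]
            linarith [Real.pi_le_four]
        _ ≤ _ := by rw [one_mul]; exact h6
    have h8 : |((a1 ^ 2 - 2 * q : ℤ) : ℝ) / q - 2 * Real.cos (2 * θk)| ≤ 2 * E := by
      push_cast
      rw [hcos, ← mul_sub, abs_mul, abs_two]
      have := Real.abs_cos_sub_cos_le (2 * θ) (2 * θk)
      rw [← mul_sub, abs_mul, abs_two] at this
      linarith
    rcases hN k _ q hq0 h8 with h9 | h9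
    · left
      have := Finset.single_le_sum (f := N) (fun _ _ => Nat.zero_le _) hkn
      exact_mod_cast h9.trans this
    · right
      refine ⟨2 * n, by omega, ?_⟩
      rw [hβθ]
      apply rootu
      push_cast at h9
      rw [hcos] at h9
      have h10 : Real.cos (2 * θ) = Real.cos (2 * θk) := by linarith
      have hnk : n * (2 * θk) = (2 * k + 1 : ℤ) * (2 * Real.pi) := by
        rw [hθk]; push_cast; field_simp
      obtain ⟨j, hj | hj⟩ := Real.cos_eq_cos_iff.mp h10
      · rw [show 2 * (n:ℝ) * θ = ((2 * k + 1 - n * j : ℤ) : ℝ) * (2 * Real.pi) by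
          have : 2 * (n:ℝ) * θ = n * (2 * θk) - n * (2 * j * Real.pi) := by rw [hj]; ring
          rw [this, hnk]; push_cast; ring]
        exact Real.cos_int_mul_two_pi _
      · rw [show 2 * (n:ℝ) * θ = ((n * j - (2 * k + 1) : ℤ) : ℝ) * (2 * Real.pi) by
          have : 2 * (n:ℝ) * θ = n * (2 * j * Real.pi) - n * (2 * θk) := by rw [hj]; ring
          rw [this, hnk]; push_cast; ring]
        exact Real.cos_int_mul_two_pi _
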